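/- arXiv:2301.00063 — 7 statements merged into one kernel-verified Lean document; each statement's English description precedes it below -/
import Mathlib

section
/- Let f, g : [0,∞) → ℝ be càdlàg functions such that Δf(t) ≥ 0 for every t > 0, g is non-decreasing, and f(0) + g(0) ≥ 0. Then every solution h of the time-change equation TCE(f,g) is non-negative, i.e. h(t) ≥ 0 for all t ≥ 0. -/
/-!
Write `c = posTime h`, which is non-decreasing and `1`-Lipschitz, and suppose `h t < 0`. Let `s₀` be
the first time at which `c` reaches the level `u = c t`. Since `g` is non-decreasing,
`h s₀ = f u + g s₀ ≤ h t < 0`; as `h 0 = f 0 + g 0 ≥ 0`, this forces `s₀ > 0`, and then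
`u > c 0 = 0` by minimality of `s₀`. When `s` increases to `s₀`, `c s` increases to `u` through values `< u`, hence
`h s ≤ f (c s) + g s₀ → f (u-) + g s₀ ≤ f u + g s₀ < 0`. So `h < 0` just before `s₀`, `c` is constant
there, and the level `u` was reached before `s₀`: a contradiction.
-/

open MeasureTheory Set Function Filter Topology

/-- `f : ℝ → ℝ` is càdlàg on `[0,∞)`: right-continuous at every `t ≥ 0`
and with left limits at every `t > 0`. -/
def CadlagOn (f : ℝ → ℝ) : Prop :=
  (∀ t : ℝ, 0 ≤ t → ContinuousWithinAt f (Ici t) t) ∧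
  (∀ t : ℝ, 0 < t → ∃ L : ℝ, Filter.Tendsto f (nhdsWithin t (Iio t)) (nhds L))

/-- `f` has non-negative jumps on `(0,∞)`: `Δf(t) = f t − f(t−) ≥ 0`. -/
def NonnegJumps (f : ℝ → ℝ) : Prop :=
  ∀ t : ℝ, 0 < t → Function.leftLim f t ≤ f t

/-- `Leb({s ∈ [0,t] : h(s) > 0})`. -/
noncomputable def posTime (h : ℝ → ℝ) (t : ℝ) : ℝ :=
  (volume {s ∈ Icc (0:ℝ) t | 0 < h s}).toReal

/-- `Leb({s ∈ [0,t] : h(s) = 0})`. -/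
noncomputable def zeroTime (h : ℝ → ℝ) (t : ℝ) : ℝ :=
  (volume {s ∈ Icc (0:ℝ) t | h s = 0}).toReal

/-- `h` is a solution of the time-change equation `TCE(f,g)`:
`h` is measurable on `[0,∞)` and `h(t) = f(c(t)) + g(t)` for all `t ≥ 0`,
where `c(t) = Leb({s ∈ [0,t] : h(s) > 0})`. -/
def TCESol (f g h : ℝ → ℝ) : Prop :=
  Measurable ((Ici (0:ℝ)).restrict h) ∧
  ∀ t : ℝ, 0 ≤ t → h t = f (posTime h t) + g t

/-- The set defining `posTime h t` lies in a bounded interval, so `toReal` loses nothing. -/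
theorem posTime_set_ne_top (h : ℝ → ℝ) (t : ℝ) :
    volume {s ∈ Icc (0:ℝ) t | 0 < h s} ≠ ⊤ :=
  measure_ne_top_of_subset (sep_subset _ _) measure_Icc_lt_top.ne

theorem posTime_mono (h : ℝ → ℝ) : Monotone (posTime h) := fun _ b hab =>
  ENNReal.toReal_mono (posTime_set_ne_top h b)
    (measure_mono fun _ hr => ⟨⟨hr.1.1, hr.1.2.trans hab⟩, hr.2⟩)

theorem posTime_le_add (h : ℝ → ℝ) {a b : ℝ} (hab : a ≤ b) :
    posTime h b ≤ posTime h a + (b - a) := by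
  have hsub : {s ∈ Icc (0:ℝ) b | 0 < h s} ⊆ {s ∈ Icc (0:ℝ) a | 0 < h s} ∪ Ioc a b := by
    rintro r ⟨⟨h1, h2⟩, h3⟩
    rcases le_or_gt r a with hr | hr
    · exact Or.inl ⟨⟨h1, hr⟩, h3⟩
    · exact Or.inr ⟨hr, h2⟩
  have hle := (measure_mono (μ := volume) hsub).trans (measure_union_le _ _)
  rw [Real.volume_Ioc] at hle
  have := ENNReal.toReal_mono
    (ENNReal.add_ne_top.2 ⟨posTime_set_ne_top h a, ENNReal.ofReal_ne_top⟩) hle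
  rwa [ENNReal.toReal_add (posTime_set_ne_top h a) ENNReal.ofReal_ne_top,
    ENNReal.toReal_ofReal (sub_nonneg.2 hab)] at this

theorem posTime_continuous (h : ℝ → ℝ) : Continuous (posTime h) := by
  refine (LipschitzWith.of_le_add fun x y => ?_).continuous
  rcases le_total x y with hxy | hxy
  · exact (posTime_mono h hxy).trans (le_add_of_nonneg_right dist_nonneg)
  · rw [Real.dist_eq, abs_of_nonneg (sub_nonneg.2 hxy)]
    exact posTime_le_add h hxy

theorem posTime_eq_of_nonpos (h : ℝ → ℝ) {a b : ℝ} (hab : a ≤ b)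
    (hn : ∀ r ∈ Ioc a b, h r ≤ 0) : posTime h a = posTime h b := by
  have : {s ∈ Icc (0:ℝ) a | 0 < h s} = {s ∈ Icc (0:ℝ) b | 0 < h s} := by
    ext r
    refine ⟨fun hr => ⟨⟨hr.1.1, hr.1.2.trans hab⟩, hr.2⟩, fun hr => ⟨⟨hr.1.1, ?_⟩, hr.2⟩⟩
    by_contra! hc
    exact absurd hr.2 (hn r ⟨hc, hr.1.2⟩).not_gt
  simp only [posTime, this]

/-- Every solution of `TCE(f,g)` is non-negative. -/
theorem tce_solution_nonneg
    (f g h : ℝ → ℝ)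
    (hf : CadlagOn f) (hg : CadlagOn g)
    (hjump : NonnegJumps f)
    (hgmono : MonotoneOn g (Ici 0))
    (h0 : 0 ≤ f 0 + g 0)
    (hsol : TCESol f g h) :
    ∀ t : ℝ, 0 ≤ t → 0 ≤ h t := by
  obtain ⟨-, hh⟩ := hsol
  intro t ht
  by_contra! hneg
  have hc0 : posTime h 0 = 0 := by
    have : volume {s ∈ Icc (0:ℝ) 0 | 0 < h s} = 0 :=
      measure_mono_null (sep_subset _ _) (by simp)
    rw [posTime, this, ENNReal.toReal_zero]
  obtain ⟨s₀, ⟨⟨hs0, hst⟩, hcs⟩, hmin⟩ :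
      ∃ s₀, IsLeast (Icc 0 t ∩ posTime h ⁻¹' {posTime h t}) s₀ :=
    (isCompact_Icc.inter_right
      (isClosed_singleton.preimage (posTime_continuous h))).exists_isLeast ⟨t, ⟨ht, le_rfl⟩, rfl⟩
  rw [mem_preimage, mem_singleton_iff] at hcs
  have hs₀neg : f (posTime h s₀) + g s₀ < 0 := by
    have := hgmono hs0 ht hst
    rw [hh t ht] at hneg
    rw [hcs]
    linarith
  have hs₀pos : 0 < s₀ := by
    refine lt_of_le_of_ne hs0 fun h' => ?_
    rw [← h', hc0] at hs₀neg
    linarith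
  have hlt : ∀ s, 0 ≤ s → s < s₀ → posTime h s < posTime h s₀ := fun s hs hss =>
    lt_of_le_of_ne (posTime_mono h hss.le) fun h' =>
      absurd (hmin ⟨⟨hs, hss.le.trans hst⟩, h'.trans hcs⟩) hss.not_ge
  have hupos : 0 < posTime h s₀ := hc0 ▸ hlt 0 le_rfl hs₀pos
  have hleft : Tendsto f (𝓝[<] posTime h s₀) (𝓝 (leftLim f (posTime h s₀))) :=
    tendsto_leftLim_of_tendsto (hf.2 _ hupos)
  have hcleft : Tendsto (posTime h) (𝓝[<] s₀) (𝓝[<] posTime h s₀) := by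
    refine tendsto_nhdsWithin_iff.2
      ⟨(posTime_continuous h).continuousAt.tendsto.mono_left nhdsWithin_le_nhds, ?_⟩
    filter_upwards [Ioo_mem_nhdsLT hs₀pos] with s hs
    exact hlt s hs.1.le hs.2
  have hev : ∀ᶠ s in 𝓝[<] s₀, f (posTime h s) < -g s₀ :=
    (hleft.comp hcleft).eventually_lt_const (by linarith [hjump _ hupos])
  obtain ⟨a, ha, hsub⟩ := (mem_nhdsLT_iff_exists_Ioo_subset' hs₀pos).1
    (hev.and (Ioo_mem_nhdsLT hs₀pos))
  obtain ⟨b, hab, hb⟩ := exists_between (show a < s₀ from ha)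
  have hb0 : 0 ≤ b := (hsub ⟨hab, hb⟩).2.1.le
  refine (hlt b hb0 hb).ne (posTime_eq_of_nonpos h hb.le fun r hr => ?_)
  have hr0 : 0 ≤ r := hb0.trans hr.1.le
  rw [hh r hr0]
  rcases hr.2.eq_or_lt with rfl | hrs
  · exact hs₀neg.le
  · have h1 : f (posTime h r) < -g s₀ := (hsub ⟨hab.trans hr.1, hrs⟩).1
    linarith [hgmono hr0 hs0 hrs.le]
end

section
/- Let f : [0,∞) → ℝ be càdlàg with Δf(t) ≥ 0 for every t > 0 and f(0) ≥ 0, and let γ > 0. Set l(t) = sup_{0 ≤ s ≤ t} ((−f(s)) ∨ 0) and r = f + l, and assume Leb({t ≥ 0 : r(t) = 0}) = 0. Let a(t) = t + l(t)/γ, let c : [0,∞) → [0,∞) be the (continuous, strictly increasing) inverse of a, and let h = r ∘ c. Then h is a solution of the sticky equation Sγ(f); moreover c(t) = Leb({s ∈ [0,t] : h(s) > 0}) and l(c(t)) = γ · Leb({s ∈ [0,t] : h(s) = 0}) = γ(t − c(t)) for all t ≥ 0. -/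
/-!
Write `l` for the running maximum and `a(u) = u + l(u)/γ`.  As `l` is nondecreasing, `a` is strictly
increasing, so a right inverse `c` of `a` is strictly increasing, surjective onto `[0,∞)` and
1-Lipschitz; in particular its continuity needs no separate argument for the continuity of `l`.

The point is the identity `Leb {s ≤ t : h s > 0} = c t` (`volume_pos_eq`).  If `r u > 0`, that is
`f u > -l u`, right-continuity of `f` makes `l` constant on some `[u, u + ε)`
(`runMax_eventually_const`), so `c` is a unit-slope translation just to the right of `s` whenever
`h s = r (c s) > 0`.  A monotone function is differentiable almost everywhere, hence `c' = 1` almost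
everywhere on `P = {s ≤ t : h s > 0}`.  The change of variables formula for the injective map `c`,
together with the fact that Lipschitz maps send null sets to null sets, gives
`Leb P = Leb (c '' P)`.  Since `c '' P = {u ≤ c t : r u > 0}` and `{r = 0}` is null, this is `c t`.

Since `h ≥ 0`, the time spent at zero is the complement `t - c t = l (c t) / γ`, and the sticky
equation reads `h t = f (c t) + l (c t)`, the definition of `r (c t)`.
-/

open MeasureTheory Set Function Filter Topology

/-- `h` is a solution of the sticky equation `Sγ(f)`:
`h` is measurable on `[0,∞)` and, for all `t ≥ 0`,
`h(t) = f(Leb({s ∈ [0,t] : h(s) > 0})) + γ·Leb({s ∈ [0,t] : h(s) = 0})`. -/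
def StickySol (f : ℝ → ℝ) (γ : ℝ) (h : ℝ → ℝ) : Prop :=
  Measurable ((Ici (0:ℝ)).restrict h) ∧
  ∀ t : ℝ, 0 ≤ t → h t = f (posTime h t) + γ * zeroTime h t

/-- A càdlàg function is bounded below on compact intervals, so the suprema defining the running
maximum are genuine. -/
lemma CadlagOn.bddAbove {f : ℝ → ℝ} (hf : CadlagOn f) (T : ℝ) :
    BddAbove ((fun s => max (-f s) 0) '' Icc (0:ℝ) T) := by
  have key : ∀ (F : Filter ℝ) (L : ℝ), Tendsto f F (𝓝 L) →
      ∃ M : ℝ, ∀ᶠ x in F, max (-f x) 0 ≤ M := by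
    intro F L h
    refine ⟨max (-L) 0 + 1, ?_⟩
    have h2 : Tendsto (fun x => max (-f x) 0) F (𝓝 (max (-L) 0)) :=
      h.neg.max tendsto_const_nhds
    exact (h2.eventually (gt_mem_nhds (lt_add_one _))).mono fun x hx => hx.le
  refine isCompact_Icc.induction_on (p := fun s => BddAbove ((fun s => max (-f s) 0) '' s))
    (by simp) (fun s t hst h => h.mono (image_mono hst))
    (fun s t hs ht => by rw [image_union]; exact hs.union ht) ?_
  intro x hx
  have mk : ∀ M : ℝ, (∀ᶠ y in 𝓝[Icc 0 T] x, max (-f y) 0 ≤ M) →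
      ∃ t ∈ 𝓝[Icc 0 T] x, BddAbove ((fun s => max (-f s) 0) '' t) := by
    intro M hM
    refine ⟨_, hM, M, ?_⟩
    rintro _ ⟨y, hy, rfl⟩
    exact hy
  obtain ⟨M, hM⟩ := key _ _ (hf.1 x hx.1)
  rcases hx.1.eq_or_lt with h0 | h0
  · subst h0
    exact mk M (hM.filter_mono (nhdsWithin_mono _ Icc_subset_Ici_self))
  · obtain ⟨L, hL⟩ := hf.2 x h0
    obtain ⟨M', hM'⟩ := key _ _ hL
    refine mk (max M M') (Filter.Eventually.filter_mono nhdsWithin_le_nhds ?_)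
    rw [← nhdsLT_sup_nhdsGE, eventually_sup]
    exact ⟨hM'.mono fun y hy => hy.trans (le_max_right _ _),
      hM.mono fun y hy => hy.trans (le_max_left _ _)⟩

/-- A function that is right-continuous on `[0,∞)` is Borel there: after freezing it at `f 0` on
the left, it is the limit of its values at the next point of the grid `ℤ / (n + 1)`. -/
lemma CadlagOn.measurable_max {f : ℝ → ℝ} (hf : CadlagOn f) :
    Measurable (fun t => f (max t 0)) := by
  set g : ℝ → ℝ := fun t => f (max t 0) with hg
  have hgc : ∀ t, ContinuousWithinAt g (Ici t) t := by
    intro t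
    have h1 := hf.1 (max t 0) (le_max_right _ _)
    refine ContinuousWithinAt.comp (f := fun t : ℝ => max t 0) h1
      (by fun_prop : Continuous fun t : ℝ => max t 0).continuousWithinAt ?_
    intro s hs
    exact max_le_max_right 0 (mem_Ici.1 hs)
  let q : ℕ → ℝ → ℝ := fun n t => ((⌊((n:ℝ) + 1) * t⌋ : ℝ) + 1) / ((n:ℝ) + 1)
  have hq : ∀ t, Tendsto (fun n => q n t) atTop (𝓝[Ici t] t) := by
    intro t
    have hlo : ∀ n, t ≤ q n t := fun n => by
      have hn : (0:ℝ) < (n:ℝ) + 1 := by positivity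
      rw [le_div_iff₀ hn, mul_comm]
      exact (Int.lt_floor_add_one _).le
    have hhi : ∀ n, q n t ≤ t + 1 / ((n:ℝ) + 1) := fun n => by
      have hn : (0:ℝ) < (n:ℝ) + 1 := by positivity
      have := Int.floor_le (((n:ℝ) + 1) * t)
      rw [div_le_iff₀ hn, add_mul t, div_mul_cancel₀ _ hn.ne', mul_comm t]
      linarith
    refine tendsto_nhdsWithin_iff.2 ⟨?_, Eventually.of_forall hlo⟩
    refine tendsto_of_tendsto_of_tendsto_of_le_of_le tendsto_const_nhds ?_ hlo hhi
    simpa using tendsto_const_nhds.add (tendsto_one_div_add_atTop_nhds_zero_nat (𝕜 := ℝ))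
  refine measurable_of_tendsto_metrizable (f := fun n t => g (q n t)) ?_ ?_
  · intro n
    have : Measurable (fun k : ℤ => g (((k:ℝ) + 1) / ((n:ℝ) + 1))) := measurable_from_top
    exact this.comp (Int.measurable_floor.comp (measurable_const_mul _))
  · rw [tendsto_pi_nhds]
    intro t
    exact (hgc t).tendsto.comp (hq t)

/-- Where `f + l > 0`, the running maximum `l` is locally constant to the right. -/
lemma runMax_eventually_const {f l : ℝ → ℝ} (hf : CadlagOn f)
    (hl : ∀ t : ℝ, 0 ≤ t → l t = sSup ((fun s => max (-f s) 0) '' Icc (0:ℝ) t))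
    {u : ℝ} (hu : 0 ≤ u) (hpos : 0 < f u + l u) :
    ∃ ε > 0, ∀ v ∈ Ico u (u + ε), l v = l u := by
  have h1 : ∀ᶠ x in 𝓝[≥] u, -l u < f x :=
    (hf.1 u hu).tendsto.eventually (lt_mem_nhds (by linarith))
  obtain ⟨b, hb, hsub⟩ := (mem_nhdsGE_iff_exists_Ico_subset).1 h1
  refine ⟨b - u, sub_pos.2 hb, fun v hv => ?_⟩
  have hvb : v < b := by linarith [hv.2]
  have hle : ∀ s ∈ Icc 0 u, max (-f s) 0 ≤ l u := fun s hs => by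
    rw [hl u hu]
    exact le_csSup (hf.bddAbove u) ⟨s, hs, rfl⟩
  apply le_antisymm
  · rw [hl v (hu.trans hv.1)]
    refine csSup_le ((nonempty_Icc.2 (hu.trans hv.1)).image _) ?_
    rintro _ ⟨s, hs, rfl⟩
    rcases le_total s u with h | h
    · exact hle s ⟨hs.1, h⟩
    · have h2 : -l u < f s := hsub ⟨h, hs.2.trans_lt hvb⟩
      exact max_le (by linarith) ((le_max_right _ _).trans (hle u ⟨hu, le_rfl⟩))
  · rw [hl v (hu.trans hv.1), hl u hu]
    exact csSup_le_csSup (hf.bddAbove v) ((nonempty_Icc.2 hu).image _)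
      (image_mono (Icc_subset_Icc_right hv.1))

/-- Change of variables for a strictly increasing 1-Lipschitz `c` on `[0,∞)` that is a unit-slope
translation to the right of every point of `P`: it preserves the measure of `P`.  Differentiability
may fail from the left on `P`, but only on a null set, which `c` maps to a null set. -/
lemma volume_image_eq {c : ℝ → ℝ} (hmono : StrictMonoOn c (Ici 0))
    (hlip : LipschitzOnWith 1 c (Ici 0)) {P : Set ℝ} (hP : MeasurableSet P) (hP0 : P ⊆ Ici 0)
    (hder : ∀ s ∈ P, HasDerivWithinAt c 1 (Ici s) s) :
    volume (c '' P) = volume P := by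
  have hae := hmono.monotoneOn.ae_differentiableWithinAt measurableSet_Ici
  rw [ae_restrict_iff' measurableSet_Ici] at hae
  set B : Set ℝ := {x | ¬ (x ∈ Ici (0:ℝ) → DifferentiableWithinAt ℝ c (Ici 0) x)} with hB
  have hB0 : volume B = 0 := hae
  set N := toMeasurable volume B with hN
  have hN0 : volume N = 0 := by rw [hN, measure_toMeasurable, hB0]
  have hderiv : ∀ s ∈ P \ N, HasDerivWithinAt c 1 (P \ N) s := by
    rintro s ⟨hs, hsN⟩
    have hsB : s ∉ B := fun h => hsN (subset_toMeasurable _ _ h)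
    have hd : DifferentiableWithinAt ℝ c (Ici 0) s := by
      simp only [hB, mem_ofPred_eq, not_not] at hsB
      exact hsB (hP0 hs)
    have h1 := hd.hasDerivWithinAt
    have h2 := (h1.mono (Ici_subset_Ici.2 (hP0 hs)))
    have h3 := (uniqueDiffWithinAt_Ici s).eq_deriv _ h2 (hder s hs)
    rw [h3] at h1
    exact h1.mono (sdiff_subset.trans hP0)
  have hcv := lintegral_image_eq_lintegral_abs_deriv_mul (hP.diff (measurableSet_toMeasurable _ _))
    hderiv (hmono.injOn.mono (sdiff_subset.trans hP0)) (fun _ => 1)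
  simp only [abs_one, ENNReal.ofReal_one, one_mul, setLIntegral_one] at hcv
  have hnullim : volume (c '' (P ∩ N)) = 0 := by
    have h := (hlip.mono (inter_subset_left.trans hP0 : P ∩ N ⊆ Ici 0)).hausdorffMeasure_image_le
      (d := 1) zero_le_one
    rw [hausdorffMeasure_real, measure_mono_null inter_subset_right hN0, mul_zero] at h
    exact le_antisymm h bot_le
  have hmeas : volume (P \ N) = volume P := measure_sdiff_null hN0
  rw [hmeas] at hcv
  apply le_antisymm
  · calc volume (c '' P) = volume (c '' (P ∩ N) ∪ c '' (P \ N)) := by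
          rw [← image_union, inter_union_sdiff]
      _ ≤ volume (c '' (P ∩ N)) + volume (c '' (P \ N)) := measure_union_le _ _
      _ = volume P := by rw [hnullim, zero_add, hcv]
  · rw [← hcv]
    exact measure_mono (image_mono sdiff_subset)

/-- The clock identity: `h = r ∘ c` is positive on `[0, t]` for a total time `c t`. -/
lemma volume_pos_eq {l r c : ℝ → ℝ} {γ : ℝ} (hmono : StrictMonoOn c (Ici 0))
    (hlip : LipschitzOnWith 1 c (Ici 0)) (hl0 : ∀ t, 0 ≤ t → 0 ≤ l t) (hγ : 0 < γ)
    (hlm : MonotoneOn l (Ici 0))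
    (hrnn : ∀ t, 0 ≤ t → 0 ≤ r t)
    (hconst : ∀ u, 0 ≤ u → 0 < r u → ∃ ε > 0, ∀ v ∈ Ico u (u + ε), l v = l u)
    (hnull : volume {t : ℝ | 0 ≤ t ∧ r t = 0} = 0)
    (hc : ∀ t : ℝ, 0 ≤ t → 0 ≤ c t ∧ c t + l (c t) / γ = t)
    {t : ℝ} (ht : 0 ≤ t) (hP : MeasurableSet {s ∈ Icc (0:ℝ) t | 0 < r (c s)}) :
    volume {s ∈ Icc (0:ℝ) t | 0 < r (c s)} = ENNReal.ofReal (c t) := by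
  have hP0 : {s ∈ Icc (0:ℝ) t | 0 < r (c s)} ⊆ Ici 0 := fun s hs => hs.1.1
  rw [← volume_image_eq hmono hlip hP hP0]
  · have him : c '' {s ∈ Icc (0:ℝ) t | 0 < r (c s)} = Icc 0 (c t) \ {t | 0 ≤ t ∧ r t = 0} := by
      ext u
      constructor
      · rintro ⟨s, ⟨hs, hpos⟩, rfl⟩
        exact ⟨⟨(hc s hs.1).1, hmono.monotoneOn hs.1 ht hs.2⟩, fun h => hpos.ne' h.2⟩
      · rintro ⟨⟨hu0, hut⟩, hu⟩
        have hru : 0 < r u := (hrnn u hu0).lt_of_ne fun h => hu ⟨hu0, h.symm⟩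
        -- `u` is attained at the time `a(u) = u + l(u)/γ`, because `a` is injective
        have hau : 0 ≤ u + l u / γ := add_nonneg hu0 (div_nonneg (hl0 u hu0) hγ.le)
        obtain ⟨hcu0, hcu⟩ := hc _ hau
        have hcau : c (u + l u / γ) = u := by
          rcases lt_trichotomy (c (u + l u / γ)) u with h | h | h
          · have := div_le_div_of_nonneg_right (hlm hcu0 hu0 h.le) hγ.le
            linarith
          · exact h
          · have := div_le_div_of_nonneg_right (hlm hu0 hcu0 h.le) hγ.le
            linarith
        refine ⟨u + l u / γ, ⟨⟨hau, ?_⟩, by rwa [hcau]⟩, hcau⟩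
        rw [← hcau] at hut
        exact (hmono.le_iff_le hau ht).1 hut
    rw [him, measure_sdiff_null hnull, Real.volume_Icc, sub_zero]
  · rintro s ⟨hs, hpos⟩
    obtain ⟨ε, hε, hv⟩ := hconst (c s) (hc s hs.1).1 hpos
    have hid : HasDerivWithinAt (fun x => x - l (c s) / γ) 1 (Ici s) s :=
      ((hasDerivAt_id s).sub_const _).hasDerivWithinAt
    refine hid.congr_of_eventuallyEq ?_ (by linarith [(hc s hs.1).2])
    filter_upwards [Ico_mem_nhdsGE (show s < s + ε by linarith)] with x hx
    have hx0 : 0 ≤ x := hs.1.trans hx.1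
    have h1 : c s ≤ c x := hmono.monotoneOn hs.1 hx0 hx.1
    have h2 := hlip.dist_le_mul x hx0 s hs.1
    rw [Real.dist_eq, Real.dist_eq, abs_of_nonneg (by linarith), abs_of_nonneg (by linarith [hx.1]),
      NNReal.coe_one, one_mul] at h2
    have h3 := hv (c x) ⟨h1, by linarith [hx.2]⟩
    have h4 := (hc x hx0).2
    rw [h3] at h4
    linarith

/-- Construction of a solution of the sticky equation `Sγ(f)` from the Skorohod
reflection `r = f + l` of `f`, assuming `{t ≥ 0 : r(t) = 0}` is Lebesgue-null:
with `a(t) = t + l(t)/γ` and `c` the inverse of `a` on `[0,∞)`, the function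
`h = r ∘ c` solves `Sγ(f)`; moreover `c(t) = Leb({s ∈ [0,t] : h(s) > 0})` and
`l(c(t)) = γ·Leb({s ∈ [0,t] : h(s) = 0}) = γ(t − c(t))` for all `t ≥ 0`. -/
theorem sticky_solution_construction
    (f l r c : ℝ → ℝ) (γ : ℝ) (hγ : 0 < γ)
    (hf : CadlagOn f) (hjump : NonnegJumps f) (hf0 : 0 ≤ f 0)
    (hl : ∀ t : ℝ, 0 ≤ t → l t = sSup ((fun s => max (-f s) 0) '' Icc (0:ℝ) t))
    (hr : ∀ t : ℝ, r t = f t + l t)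
    (hnull : volume {t : ℝ | 0 ≤ t ∧ r t = 0} = 0)
    (hc : ∀ t : ℝ, 0 ≤ t → 0 ≤ c t ∧ c t + l (c t) / γ = t) :
    StickySol f γ (fun t => r (c t)) ∧
    ContinuousOn c (Ici 0) ∧ StrictMonoOn c (Ici 0) ∧
    (∀ t : ℝ, 0 ≤ t → c t = posTime (fun u => r (c u)) t) ∧
    (∀ t : ℝ, 0 ≤ t →
      l (c t) = γ * zeroTime (fun u => r (c u)) t ∧ l (c t) = γ * (t - c t)) := by
  have hle : ∀ t, 0 ≤ t → max (-f t) 0 ≤ l t := fun t ht => by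
    rw [hl t ht]
    exact le_csSup (hf.bddAbove t) ⟨t, ⟨ht, le_rfl⟩, rfl⟩
  have hl0 : ∀ t, 0 ≤ t → 0 ≤ l t := fun t ht => (le_max_right _ _).trans (hle t ht)
  have hrnn : ∀ t, 0 ≤ t → 0 ≤ r t := fun t ht => by
    rw [hr]
    linarith [(le_max_left (-f t) 0).trans (hle t ht)]
  have hlm : MonotoneOn l (Ici 0) := by
    intro s hs t ht hst
    rw [hl s hs, hl t ht]
    exact csSup_le_csSup (hf.bddAbove t) ((nonempty_Icc.2 hs).image _)
      (image_mono (Icc_subset_Icc_right hst))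
  have hmono : StrictMonoOn c (Ici 0) := by
    intro s hs t ht hst
    by_contra! h
    have := div_le_div_of_nonneg_right (hlm (hc t ht).1 (hc s hs).1 h) hγ.le
    linarith [(hc t ht).2, (hc s hs).2]
  have hlip : LipschitzOnWith 1 c (Ici 0) := by
    have key : ∀ s t, 0 ≤ s → s ≤ t → dist (c t) (c s) ≤ dist t s := by
      intro s t hs hst
      have ht := hs.trans hst
      have h1 := hmono.monotoneOn hs ht hst
      have := div_le_div_of_nonneg_right (hlm (hc s hs).1 (hc t ht).1 h1) hγ.le
      rw [Real.dist_eq, Real.dist_eq, abs_of_nonneg (by linarith), abs_of_nonneg (by linarith)]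
      linarith [(hc t ht).2, (hc s hs).2]
    refine LipschitzOnWith.of_dist_le_mul fun x hx y hy => ?_
    rw [NNReal.coe_one, one_mul]
    rcases le_total x y with h | h
    · rw [dist_comm, dist_comm x]
      exact key x y hx h
    · exact key y x hy h
  have hcm : Measurable ((Ici (0:ℝ)).domRestrict c) :=
    (continuousOn_iff_continuous_domRestrict.1 hlip.continuousOn).measurable
  -- `r ∘ c` is measurable: `l (c s) = γ (s - c s)` is continuous in `s`
  have hmeas : Measurable ((Ici (0:ℝ)).domRestrict fun t => r (c t)) := by
    have h1 : Measurable fun x : Ici (0:ℝ) =>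
        f (max ((Ici (0:ℝ)).domRestrict c x) 0) + γ * (x - (Ici (0:ℝ)).domRestrict c x) :=
      (hf.measurable_max.comp hcm).add ((measurable_subtype_coe.sub hcm).const_mul γ)
    convert h1 using 1
    ext x
    obtain ⟨h2, h3⟩ := hc x x.2
    simp only [domRestrict_apply, max_eq_left h2, hr]
    rw [← eq_sub_iff_add_eq', div_eq_iff hγ.ne'] at h3
    rw [h3]
    ring
  have hPm : ∀ t, MeasurableSet {s ∈ Icc (0:ℝ) t | 0 < r (c s)} := by
    intro t
    have h1 : MeasurableSet (((↑) : Ici (0:ℝ) → ℝ) ''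
        ((Ici (0:ℝ)).domRestrict (fun t => r (c t)) ⁻¹' Ioi 0)) :=
      measurableSet_Ici.subtype_image (hmeas measurableSet_Ioi)
    convert measurableSet_Icc.inter h1 using 1
    ext s
    simp only [mem_ofPred_eq, mem_inter_iff, mem_image, mem_preimage, domRestrict_apply, mem_Ioi,
      Subtype.exists, exists_and_right, exists_eq_right, mem_Ici]
    exact ⟨fun h => ⟨h.1, h.1.1, h.2⟩, fun h => ⟨h.1, h.2.2⟩⟩
  have hvol : ∀ t, 0 ≤ t →
      volume {s ∈ Icc (0:ℝ) t | 0 < r (c s)} = ENNReal.ofReal (c t) := fun t ht =>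
    volume_pos_eq hmono hlip hl0 hγ hlm hrnn
      (fun u hu hpos => runMax_eventually_const hf hl hu (by rwa [← hr])) hnull hc ht (hPm t)
  have hpos : ∀ t, 0 ≤ t → posTime (fun u => r (c u)) t = c t := fun t ht => by
    rw [posTime, hvol t ht, ENNReal.toReal_ofReal (hc t ht).1]
  have hzero : ∀ t, 0 ≤ t → zeroTime (fun u => r (c u)) t = t - c t := fun t ht => by
    have h1 : {s ∈ Icc (0:ℝ) t | r (c s) = 0} =
        Icc 0 t \ {s ∈ Icc (0:ℝ) t | 0 < r (c s)} := by
      ext s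
      constructor
      · rintro ⟨hs, h⟩
        exact ⟨hs, fun h' => h'.2.ne' h⟩
      · rintro ⟨hs, h⟩
        exact ⟨hs, le_antisymm (not_lt.1 fun h' => h ⟨hs, h'⟩) (hrnn _ (hc s hs.1).1)⟩
    rw [zeroTime, h1, measure_sdiff (fun s hs => hs.1) (hPm t).nullMeasurableSet
      (by rw [hvol t ht]; exact ENNReal.ofReal_ne_top), hvol t ht, Real.volume_Icc, sub_zero,
      ← ENNReal.ofReal_sub _ (hc t ht).1, ENNReal.toReal_ofReal]
    have := div_nonneg (hl0 _ (hc t ht).1) hγ.le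
    linarith [(hc t ht).2]
  have hlc : ∀ t, 0 ≤ t → l (c t) = γ * (t - c t) := fun t ht => by
    have h := (hc t ht).2
    rw [← eq_sub_iff_add_eq', div_eq_iff hγ.ne'] at h
    rw [h, mul_comm]
  refine ⟨⟨hmeas, fun t ht => ?_⟩, hlip.continuousOn, hmono, fun t ht => (hpos t ht).symm,
    fun t ht => ⟨?_, hlc t ht⟩⟩
  · rw [hpos t ht, hzero t ht, ← hlc t ht]
    exact hr _
  · rw [hzero t ht, hlc t ht]
end

section
/- Let β < 0 < γ. Then there is no measurable function h : [0,∞) → ℝ satisfying, for all t ≥ 0, h(t) = β · Leb({s ∈ [0,t] : h(s) > 0}) + γ · Leb({s ∈ [0,t] : h(s) = 0}). -/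
/-!
The measurability of `h` plays no role: `t ↦ vol {s ∈ [0,t] | P s}` is monotone and 1-Lipschitz for
an arbitrary predicate `P`, with `vol` read as an outer measure (`monotone_occTime`,
`continuous_occTime`). Hence a solution `h` is continuous on `[0,∞)`, and `h 0 = 0`.

If `h t > 0`, let `s` be the last time in `[0,t]` with `h s ≤ 0`. Since `h > 0` on `(s,t]`, no time
at zero is accumulated there, while the time spent positive does not decrease; as `β < 0` this gives
`h t ≤ h s ≤ 0`, a contradiction. So `h ≤ 0`. Then the positive time vanishes, so
`h = γ * zeroTime h ≥ 0`, and therefore `h = 0` on `[0,∞)`. But then `zeroTime h 1 = 1` and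
`h 1 = γ > 0`, which is absurd.
-/

open MeasureTheory Set Function Filter Topology

/-- Lebesgue (outer) measure of the set of times in `[0,t]` at which `P` holds. -/
noncomputable def occTime (P : ℝ → Prop) (t : ℝ) : ℝ :=
  (volume {s ∈ Icc (0:ℝ) t | P s}).toReal

lemma occTime_set_ne_top (P : ℝ → Prop) (t : ℝ) :
    volume {s ∈ Icc (0:ℝ) t | P s} ≠ ⊤ :=
  measure_ne_top_of_subset (fun _ hs => hs.1) (by simp)

lemma monotone_occTime (P : ℝ → Prop) : Monotone (occTime P) := by
  intro s t hst
  exact ENNReal.toReal_mono (occTime_set_ne_top P t)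
    (measure_mono fun x hx => ⟨⟨hx.1.1, hx.1.2.trans hst⟩, hx.2⟩)

lemma occTime_le_add (P : ℝ → Prop) {s t : ℝ} (hst : s ≤ t) :
    occTime P t ≤ occTime P s + (t - s) := by
  have hsub : {x ∈ Icc (0:ℝ) t | P x} ⊆ {x ∈ Icc (0:ℝ) s | P x} ∪ Icc s t := by
    intro x hx
    rcases le_total x s with h | h
    · exact Or.inl ⟨⟨hx.1.1, h⟩, hx.2⟩
    · exact Or.inr ⟨h, hx.1.2⟩
  have hIcc : (volume (Icc s t)).toReal = t - s := by
    rw [Real.volume_Icc, ENNReal.toReal_ofReal (sub_nonneg.2 hst)]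
  have hfin : volume (Icc s t) ≠ ⊤ := by simp
  rw [← hIcc]
  unfold occTime
  rw [← ENNReal.toReal_add (occTime_set_ne_top P s) hfin]
  exact ENNReal.toReal_mono (ENNReal.add_ne_top.2 ⟨occTime_set_ne_top P s, hfin⟩)
    ((measure_mono hsub).trans (measure_union_le _ _))

lemma continuous_occTime (P : ℝ → Prop) : Continuous (occTime P) := by
  refine (LipschitzWith.of_le_add fun t s => ?_).continuous
  rcases le_total s t with h | h
  · rw [Real.dist_eq, abs_of_nonneg (sub_nonneg.2 h)]
    exact occTime_le_add P h
  · exact (monotone_occTime P h).trans (le_add_of_nonneg_right dist_nonneg)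

/-- If `β < 0 < γ`, the time-change equation
`h(t) = β·Leb({s ∈ [0,t] : h(s) > 0}) + γ·Leb({s ∈ [0,t] : h(s) = 0})`
admits no measurable solution. -/
theorem no_solution_negative_drift
    (β γ : ℝ) (hβ : β < 0) (hγ : 0 < γ) :
    ¬ ∃ h : ℝ → ℝ, Measurable ((Ici (0:ℝ)).restrict h) ∧
      ∀ t : ℝ, 0 ≤ t → h t = β * posTime h t + γ * zeroTime h t := by
  rintro ⟨h, -, hh⟩
  have hpc : Continuous (posTime h) := continuous_occTime fun s => 0 < h s
  have hzc : Continuous (zeroTime h) := continuous_occTime fun s => h s = 0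
  have hpm : Monotone (posTime h) := monotone_occTime fun s => 0 < h s
  have h0 : h 0 = 0 := by
    have hnull : ∀ P : ℝ → Prop, volume {s ∈ Icc (0:ℝ) 0 | P s} = 0 := fun P =>
      measure_mono_null (fun _ hs => hs.1) (by simp : volume (Icc (0:ℝ) 0) = 0)
    rw [hh 0 le_rfl, posTime, zeroTime, hnull, hnull]
    simp
  have hle : ∀ t, 0 ≤ t → h t ≤ 0 := by
    intro t ht
    by_contra! hpos
    -- `s` is the last time in `[0,t]` at which `h ≤ 0`
    have hK : IsCompact (Icc 0 t ∩ {s | β * posTime h s + γ * zeroTime h s ≤ 0}) :=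
      isCompact_Icc.inter_right
        (isClosed_le ((hpc.const_mul β).add (hzc.const_mul γ)) continuous_const)
    obtain ⟨s, ⟨⟨hs0, hst⟩, hs⟩, hmax⟩ := hK.exists_isGreatest
      ⟨0, ⟨le_rfl, ht⟩, by rw [mem_ofPred_eq, ← hh 0 le_rfl, h0]⟩
    have hz : zeroTime h t ≤ zeroTime h s := by
      refine ENNReal.toReal_mono (occTime_set_ne_top _ s) (measure_mono fun x hx => ?_)
      refine ⟨⟨hx.1.1, hmax ⟨hx.1, ?_⟩⟩, hx.2⟩
      rw [mem_ofPred_eq, ← hh x hx.1.1, hx.2]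
    have hp := mul_le_mul_of_nonpos_left (hpm hst) hβ.le
    have hz' := mul_le_mul_of_nonneg_left hz hγ.le
    rw [hh t ht] at hpos
    rw [mem_ofPred_eq] at hs
    linarith
  have hzero : ∀ t, 0 ≤ t → h t = 0 := by
    intro t ht
    refine le_antisymm (hle t ht) ?_
    have hempty : {s ∈ Icc (0:ℝ) t | 0 < h s} = ∅ :=
      eq_empty_of_forall_notMem fun s hs => (hle s hs.1.1).not_gt hs.2
    have hp : posTime h t = 0 := by rw [posTime, hempty]; simp
    rw [hh t ht, hp, mul_zero, zero_add]
    exact mul_nonneg hγ.le ENNReal.toReal_nonneg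
  have hfull : {s ∈ Icc (0:ℝ) 1 | h s = 0} = Icc 0 1 :=
    Subset.antisymm (fun _ hs => hs.1) fun s hs => ⟨hs, hzero s hs.1⟩
  have hz1 : zeroTime h 1 = 1 := by rw [zeroTime, hfull]; simp
  have hempty : {s ∈ Icc (0:ℝ) 1 | 0 < h s} = ∅ :=
    eq_empty_of_forall_notMem fun s hs => (hle s hs.1.1).not_gt hs.2
  have hp1 : posTime h 1 = 0 := by rw [posTime, hempty]; simp
  have h1 := hh 1 zero_le_one
  rw [hzero 1 zero_le_one, hp1, hz1] at h1
  linarith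
end

section
/- Let f : [0,∞) → ℝ be càdlàg with Δf(t) ≥ 0 for every t > 0 and f(0) ≥ 0, and let γ > 0. Then every solution h of the sticky equation Sγ(f) satisfies h(t) ≥ 0 for all t ≥ 0, and consequently Leb({s ∈ [0,t] : h(s) = 0}) = t − Leb({s ∈ [0,t] : h(s) > 0}) for all t ≥ 0; hence h satisfies h(t) = f^γ(c(t)) + γ t where f^γ(u) = f(u) − γu and c(t) = Leb({s ∈ [0,t] : h(s) > 0}). -/
/-!
If `h t₀ < 0`, let `τ` be the supremum of the times `s ≤ t₀` with `0 ≤ h s`. On `(τ, t₀]` the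
function `h` is negative, so both clocks `posTime h` and `zeroTime h` are frozen there and
`h τ = h t₀ < 0`; hence `τ` is a limit from the left of times `s` with `0 ≤ h s`. If `posTime h`
takes the same value at such an `s` and at `τ`, then `h s ≤ h τ < 0` because `zeroTime h` is
nondecreasing. Otherwise `posTime h s` increases strictly to `posTime h τ`, since the clocks are
1-Lipschitz, and the absence of negative jumps of `f` bounds the limit of `h s` by `h τ < 0`.
Both cases are impossible. Once `0 ≤ h`, the interval `[0, t]` is the disjoint union of
`{0 < h}` and `{h = 0}`, which gives the other two claims.
-/

open MeasureTheory Set Function Filter Topology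

/-- A clock `t ↦ Leb {s ∈ [0,t] | P s}` is nondecreasing; `P` need not be measurable. -/
lemma clock_mono (P : ℝ → Prop) {s t : ℝ} (hst : s ≤ t) :
    (volume {r ∈ Icc (0:ℝ) s | P r}).toReal ≤ (volume {r ∈ Icc (0:ℝ) t | P r}).toReal := by
  refine ENNReal.toReal_mono ?_ (measure_mono ?_)
  · exact measure_ne_top_of_subset (sep_subset _ _) (by simp)
  · rintro r ⟨⟨h0, h1⟩, h2⟩
    exact ⟨⟨h0, h1.trans hst⟩, h2⟩

/-- A clock runs at speed at most one. -/
lemma clock_le_add (P : ℝ → Prop) {s t : ℝ} (hst : s ≤ t) :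
    (volume {r ∈ Icc (0:ℝ) t | P r}).toReal ≤
      (volume {r ∈ Icc (0:ℝ) s | P r}).toReal + (t - s) := by
  have hfin : volume {r ∈ Icc (0:ℝ) s | P r} ≠ ⊤ :=
    measure_ne_top_of_subset (sep_subset _ _) (by simp)
  have hsub : {r ∈ Icc (0:ℝ) t | P r} ⊆ {r ∈ Icc (0:ℝ) s | P r} ∪ Ioc s t := by
    rintro r ⟨⟨h0, h1⟩, h2⟩
    rcases le_or_gt r s with h | h
    · exact Or.inl ⟨⟨h0, h⟩, h2⟩
    · exact Or.inr ⟨h, h1⟩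
  have hle := (measure_mono hsub).trans (measure_union_le (μ := volume) _ _)
  have := ENNReal.toReal_mono (ENNReal.add_ne_top.2 ⟨hfin, by simp⟩) hle
  rwa [ENNReal.toReal_add hfin (by simp), Real.volume_Ioc,
    ENNReal.toReal_ofReal (sub_nonneg.2 hst)] at this

lemma clock_eq_of_forall_not (P : ℝ → Prop) {s t : ℝ} (hst : s ≤ t)
    (hP : ∀ r, s < r → r ≤ t → ¬ P r) :
    (volume {r ∈ Icc (0:ℝ) t | P r}).toReal = (volume {r ∈ Icc (0:ℝ) s | P r}).toReal := by
  congr 2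
  ext r
  constructor
  · rintro ⟨⟨h0, h1⟩, h2⟩
    exact ⟨⟨h0, not_lt.1 fun h => hP r h h1 h2⟩, h2⟩
  · rintro ⟨⟨h0, h1⟩, h2⟩
    exact ⟨⟨h0, h1.trans hst⟩, h2⟩

/-- Non-negativity needs neither measurability of `h` nor right-continuity of `f`: only the
left limits of `f` and the sign of its jumps enter. -/
lemma nonneg_of_sticky {f h : ℝ → ℝ} {γ : ℝ} (hγ : 0 < γ)
    (hlim : ∀ t : ℝ, 0 < t → ∃ L : ℝ, Tendsto f (𝓝[<] t) (𝓝 L))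
    (hjump : NonnegJumps f) (hf0 : 0 ≤ f 0)
    (heq : ∀ t : ℝ, 0 ≤ t → h t = f (posTime h t) + γ * zeroTime h t)
    (t₀ : ℝ) (ht₀ : 0 ≤ t₀) : 0 ≤ h t₀ := by
  by_contra! hneg
  have h0 : 0 ≤ h 0 := by
    have hp : posTime h 0 = 0 := by
      rw [posTime, measure_mono_null (sep_subset (Icc (0:ℝ) 0) _) (by simp), ENNReal.toReal_zero]
    rw [heq 0 le_rfl, hp]
    exact add_nonneg hf0 (mul_nonneg hγ.le ENNReal.toReal_nonneg)
  set S : Set ℝ := {s ∈ Icc (0:ℝ) t₀ | 0 ≤ h s} with hS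
  have h0S : (0:ℝ) ∈ S := ⟨⟨le_rfl, ht₀⟩, h0⟩
  have hbdd : BddAbove S := ⟨t₀, fun s hs => hs.1.2⟩
  set τ := sSup S with hτ
  have hτ0 : 0 ≤ τ := le_csSup hbdd h0S
  have hτt : τ ≤ t₀ := csSup_le ⟨0, h0S⟩ fun s hs => hs.1.2
  have hafter : ∀ r, τ < r → r ≤ t₀ → h r < 0 := by
    intro r hr hrt
    by_contra! hh
    exact absurd (le_csSup hbdd (show r ∈ S from ⟨⟨hτ0.trans hr.le, hrt⟩, hh⟩)) (not_le.2 hr)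
  have hc : posTime h t₀ = posTime h τ :=
    clock_eq_of_forall_not _ hτt fun r hr hrt => (hafter r hr hrt).not_gt
  have hz : zeroTime h t₀ = zeroTime h τ :=
    clock_eq_of_forall_not _ hτt fun r hr hrt => (hafter r hr hrt).ne
  have hτneg : h τ < 0 := by rwa [heq τ hτ0, ← hc, ← hz, ← heq t₀ ht₀]
  have hval := heq τ hτ0
  have hslt : ∀ s ∈ S, s < τ := fun s hs =>
    lt_of_le_of_ne (le_csSup hbdd hs) fun e => absurd (e ▸ hs.2) (not_le.2 hτneg)
  have hzmono : ∀ s ∈ S, γ * zeroTime h s ≤ γ * zeroTime h τ := fun s hs =>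
    mul_le_mul_of_nonneg_left (clock_mono _ (hslt s hs).le) hγ.le
  have hclt : ∀ s ∈ S, posTime h s < posTime h τ := by
    intro s hs
    refine lt_of_le_of_ne (clock_mono _ (hslt s hs).le) fun e => ?_
    have h1 := heq s hs.1.1
    rw [e] at h1
    linarith [hs.2, hzmono s hs]
  have hu : 0 < posTime h τ := lt_of_le_of_lt ENNReal.toReal_nonneg (hclt 0 h0S)
  obtain ⟨L, hL⟩ := hlim _ hu
  have hLle : L ≤ f (posTime h τ) := by
    rw [← leftLim_eq_of_tendsto hL]
    exact hjump _ hu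
  -- Just before `posTime h τ`, `f` exceeds its value there by less than the deficit `-h τ`.
  have hev : ∀ᶠ x in 𝓝[<] (posTime h τ), f x < f (posTime h τ) - h τ :=
    hL.eventually_lt_const (by linarith)
  obtain ⟨l, hl, hlf⟩ := mem_nhdsLT_iff_exists_Ioo_subset.1 hev
  have hl' : l < posTime h τ := hl
  obtain ⟨s, hs, hsl⟩ :=
    exists_lt_of_lt_csSup ⟨0, h0S⟩ (show τ - (posTime h τ - l) < sSup S by linarith)
  have hlip : posTime h τ ≤ posTime h s + (τ - s) := clock_le_add _ (hslt s hs).le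
  have hfs : f (posTime h s) < f (posTime h τ) - h τ := hlf ⟨by linarith, hclt s hs⟩
  linarith [hs.2, heq s hs.1.1, hzmono s hs]

lemma zeroTime_eq_sub {h : ℝ → ℝ} (hm : Measurable ((Ici (0:ℝ)).domRestrict h))
    (hnn : ∀ t : ℝ, 0 ≤ t → 0 ≤ h t) {t : ℝ} (ht : 0 ≤ t) :
    zeroTime h t = t - posTime h t := by
  have hpos : MeasurableSet {s ∈ Icc (0:ℝ) t | 0 < h s} := by
    have h1 : MeasurableSet (Subtype.val '' ((Ici (0:ℝ)).domRestrict h ⁻¹' Ioi 0)) :=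
      measurableSet_Ici.subtype_image (hm measurableSet_Ioi)
    convert h1.inter (measurableSet_Icc (a := (0:ℝ)) (b := t)) using 1
    ext s
    simp only [mem_ofPred_eq, mem_inter_iff, mem_image, mem_preimage, Subtype.exists, mem_Ioi,
      mem_Ici, mem_Icc]
    constructor
    · rintro ⟨⟨a, b⟩, c⟩
      exact ⟨⟨s, a, c, rfl⟩, a, b⟩
    · rintro ⟨⟨s', a, c, rfl⟩, b⟩
      exact ⟨b, c⟩
  have hzero : {s ∈ Icc (0:ℝ) t | h s = 0} = Icc 0 t \ {s ∈ Icc (0:ℝ) t | 0 < h s} := by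
    ext s
    constructor
    · rintro ⟨hs, h0⟩
      exact ⟨hs, fun hp => hp.2.ne' h0⟩
    · rintro ⟨hs, hp⟩
      exact ⟨hs, le_antisymm (not_lt.1 fun h' => hp ⟨hs, h'⟩) (hnn s hs.1)⟩
  have hd := measureReal_sdiff (μ := volume) (sep_subset (Icc (0:ℝ) t) (fun s => 0 < h s)) hpos
    (by simp)
  rw [← hzero, Real.volume_real_Icc_of_le ht, sub_zero] at hd
  exact hd

/-- Every solution `h` of the sticky equation `Sγ(f)` is non-negative; hence the
time spent at `0` is `t − c(t)` and `h(t) = f^γ(c(t)) + γt` with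
`f^γ(u) = f(u) − γu` and `c(t) = Leb({s ∈ [0,t] : h(s) > 0})`. -/
theorem sticky_solution_nonneg
    (f h : ℝ → ℝ) (γ : ℝ) (hγ : 0 < γ)
    (hf : CadlagOn f) (hjump : NonnegJumps f) (hf0 : 0 ≤ f 0)
    (hsol : StickySol f γ h) :
    (∀ t : ℝ, 0 ≤ t → 0 ≤ h t) ∧
    (∀ t : ℝ, 0 ≤ t → zeroTime h t = t - posTime h t) ∧
    (∀ t : ℝ, 0 ≤ t → h t = (f (posTime h t) - γ * posTime h t) + γ * t) := by
  have hnn := nonneg_of_sticky hγ hf.2 hjump hf0 hsol.2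
  have hz : ∀ t : ℝ, 0 ≤ t → zeroTime h t = t - posTime h t := fun t ht =>
    zeroTime_eq_sub hsol.1 hnn ht
  refine ⟨hnn, hz, fun t ht => ?_⟩
  rw [hsol.2 t ht, hz t ht]
  ring
end

section
/- Let f, g : [0,∞) → ℝ be càdlàg functions such that Δf(t) ≥ 0 for every t > 0, g is non-decreasing, and f(0) + g(0) ≥ 0. Write f₋(t) = f(t−) for t > 0 and f₋(0) = f(0), and similarly g₋. Let c : [0,∞) → [0,∞) be non-decreasing with c(0) = 0, and set h(r) = f₋(c(r)) + g₋(r). Suppose that for all 0 ≤ s ≤ t, Leb({r ∈ [s,t] : h(r) > 0}) ≤ c(t) − c(s) ≤ Leb({r ∈ [s,t] : h(r) ≥ 0}). Then h(r) ≥ 0 for all r ≥ 0; moreover, if g is strictly increasing then c is strictly increasing. -/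
/-!
Write `h r = f₋(c r) + g₋(r)`. The upper bound in the integral inequality makes `c` 1-Lipschitz, so
`h` is left-continuous on `(0,∞)`, since left limits are left-continuous and `c` is non-decreasing
(`continuousWithinAt_comp_add`).

Suppose `h r < 0`, and let `σ` be the last time before `r` at which `h ≥ 0`. It exists because
`h 0 ≥ 0`, and `h σ ≥ 0` by left-continuity. As `h < 0` on `(σ, r]`, the upper bound forces
`c r = c σ`, so between `σ` and `r` the value of `h` changes only through the non-decreasing `g₋`:
`h r ≥ h σ ≥ 0`, a contradiction.

If `g` is strictly increasing and `c` were constant on `[s, t]` with `s < t`, then `h` would be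
strictly increasing there, hence positive on `(s, t]`, and the lower bound would give
`t - s ≤ c t - c s = 0`.
-/

open MeasureTheory Set Function Filter Topology

/-- The left-limit regularisation of `f`: `f₋(t) = f(t−)` for `t > 0`
and `f₋(t) = f(t)` otherwise. -/
noncomputable def leftReg (f : ℝ → ℝ) (t : ℝ) : ℝ :=
  if 0 < t then Function.leftLim f t else f t

lemma leftReg_zero (f : ℝ → ℝ) : leftReg f 0 = f 0 := by simp [leftReg]

lemma continuousWithinAt_leftReg {f : ℝ → ℝ} (hf : CadlagOn f) {x : ℝ} (hx : 0 < x) :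
    ContinuousWithinAt (leftReg f) (Iic x) x := by
  refine (continuousWithinAt_leftLim_Iic
    (tendsto_leftLim_of_tendsto (hf.2 x hx))).congr_of_eventuallyEq ?_ (by simp [leftReg, hx])
  filter_upwards [mem_nhdsWithin_of_mem_nhds (Ioi_mem_nhds hx)] with y hy
  exact if_pos hy

lemma leftReg_le {g : ℝ → ℝ} (hg : CadlagOn g) (hgmono : MonotoneOn g (Ici 0)) {t : ℝ}
    (ht : 0 ≤ t) : leftReg g t ≤ g t := by
  rcases ht.eq_or_lt with rfl | ht0
  · exact (leftReg_zero g).le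
  · rw [leftReg, if_pos ht0]
    refine le_of_tendsto (tendsto_leftLim_of_tendsto (hg.2 t ht0)) ?_
    filter_upwards [self_mem_nhdsWithin, mem_nhdsWithin_of_mem_nhds (Ioi_mem_nhds ht0)] with y hy hy0
    exact hgmono (mem_Ici.2 (le_of_lt hy0)) ht (le_of_lt hy)

lemma le_leftReg {g : ℝ → ℝ} (hg : CadlagOn g) (hgmono : MonotoneOn g (Ici 0)) {s t : ℝ}
    (hs : 0 ≤ s) (hst : s < t) : g s ≤ leftReg g t := by
  have ht : 0 < t := hs.trans_lt hst
  rw [leftReg, if_pos ht]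
  refine ge_of_tendsto (tendsto_leftLim_of_tendsto (hg.2 t ht)) ?_
  filter_upwards [mem_nhdsWithin_of_mem_nhds (Ioi_mem_nhds hst)] with y hy
  exact hgmono hs (hs.trans (le_of_lt hy)) (le_of_lt hy)

lemma leftReg_monotoneOn {g : ℝ → ℝ} (hg : CadlagOn g) (hgmono : MonotoneOn g (Ici 0)) :
    MonotoneOn (leftReg g) (Ici 0) := by
  intro s hs t _ hst
  rcases hst.eq_or_lt with rfl | hst
  · exact le_rfl
  · exact (leftReg_le hg hgmono hs).trans (le_leftReg hg hgmono hs hst)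

lemma leftReg_strictMonoOn {g : ℝ → ℝ} (hg : CadlagOn g) (hgs : StrictMonoOn g (Ici 0)) :
    StrictMonoOn (leftReg g) (Ici 0) := by
  intro s hs t _ hst
  have hs' : 0 ≤ s := hs
  obtain ⟨u, hsu, hut⟩ := exists_between hst
  exact (leftReg_le hg hgs.monotoneOn hs).trans_lt
    ((hgs hs (hs'.trans hsu.le) hsu).trans_le
      (le_leftReg hg hgs.monotoneOn (hs'.trans hsu.le) hut))

/-- Left-continuity of `h = f₋ ∘ c + g₋`. The inner function `c` has to be non-decreasing, so that
it approaches its limit from the side on which `f₋` is continuous. -/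
lemma continuousWithinAt_comp_add {f g c : ℝ → ℝ} (hf : CadlagOn f) (hg : CadlagOn g)
    (hcmono : MonotoneOn c (Ici 0)) (hcnonneg : ∀ t : ℝ, 0 ≤ t → 0 ≤ c t)
    (hlip : ∀ s t : ℝ, 0 ≤ s → s ≤ t → c t - c s ≤ t - s) {x : ℝ} (hx : 0 < x) :
    ContinuousWithinAt (fun r => leftReg f (c r) + leftReg g r) (Icc 0 x) x := by
  refine ContinuousWithinAt.add ?_
    ((continuousWithinAt_leftReg hg hx).mono Icc_subset_Iic_self)
  have hle : ∀ y ∈ Icc 0 x, c y ≤ c x := fun y hy => hcmono hy.1 hx.le hy.2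
  rcases (hcnonneg x hx.le).eq_or_lt with h | h
  -- `f₋` need not be left-continuous at `0`, but here `c` vanishes on all of `[0, x]`.
  · refine (continuousWithinAt_const (b := leftReg f (c x))).congr (fun y hy => ?_) rfl
    rw [le_antisymm (hle y hy) (h ▸ hcnonneg y hy.1)]
  · have hc : ContinuousWithinAt c (Icc 0 x) x := by
      have h1 : Tendsto (fun y => c x - (x - y)) (𝓝[Icc 0 x] x) (𝓝 (c x)) := by
        have : Continuous (fun y => c x - (x - y)) := by fun_prop
        simpa using (this.tendsto x).mono_left nhdsWithin_le_nhds
      refine tendsto_of_tendsto_of_tendsto_of_le_of_le' h1 tendsto_const_nhds ?_ ?_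
      · filter_upwards [self_mem_nhdsWithin] with y hy
        linarith [hlip y x hy.1 hy.2]
      · filter_upwards [self_mem_nhdsWithin] with y hy using hle y hy
    exact (continuousWithinAt_leftReg hf h).comp hc hle

/-- Non-negativity for solutions of the two-sided integral inequality associated
with `TCE(f,g)`: with `h(r) = f₋(c(r)) + g₋(r)`, if
`Leb({r ∈ [s,t] : h(r) > 0}) ≤ c(t) − c(s) ≤ Leb({r ∈ [s,t] : h(r) ≥ 0})` for all
`0 ≤ s ≤ t`, then `h ≥ 0` on `[0,∞)`; and if moreover `g` is strictly increasing,
then `c` is strictly increasing. -/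
theorem tce_inequality_nonneg
    (f g c : ℝ → ℝ)
    (hf : CadlagOn f) (hg : CadlagOn g)
    (hjump : NonnegJumps f)
    (hgmono : MonotoneOn g (Ici 0))
    (h0 : 0 ≤ f 0 + g 0)
    (hcmono : MonotoneOn c (Ici 0))
    (hc0 : c 0 = 0)
    (hcnonneg : ∀ t : ℝ, 0 ≤ t → 0 ≤ c t)
    (hineq : ∀ s t : ℝ, 0 ≤ s → s ≤ t →
      (volume {r ∈ Icc s t | 0 < leftReg f (c r) + leftReg g r}).toReal
          ≤ c t - c s ∧
      c t - c s ≤ (volume {r ∈ Icc s t | 0 ≤ leftReg f (c r) + leftReg g r}).toReal) :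
    (∀ r : ℝ, 0 ≤ r → 0 ≤ leftReg f (c r) + leftReg g r) ∧
    (StrictMonoOn g (Ici 0) → StrictMonoOn c (Ici 0)) := by
  set h : ℝ → ℝ := fun r => leftReg f (c r) + leftReg g r with hh
  have hfin : ∀ s t : ℝ, volume (Icc s t) ≠ ⊤ := fun s t => by simp
  have hlip : ∀ s t : ℝ, 0 ≤ s → s ≤ t → c t - c s ≤ t - s := by
    intro s t hs hst
    refine (hineq s t hs hst).2.trans ?_
    refine (ENNReal.toReal_mono (hfin s t) (measure_mono (sep_subset _ _))).trans ?_
    simp [hst]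
  have hpos : ∀ r : ℝ, 0 ≤ r → 0 ≤ h r := by
    intro r hr
    by_contra! hneg
    set S : Set ℝ := {a ∈ Icc 0 r | 0 ≤ h a} with hS
    have h0S : (0 : ℝ) ∈ S := ⟨⟨le_rfl, hr⟩, by simpa [hh, hc0, leftReg_zero] using h0⟩
    have hbdd : BddAbove S := ⟨r, fun a ha => ha.1.2⟩
    set σ := sSup S with hσ
    have hσ0 : 0 ≤ σ := le_csSup hbdd h0S
    have hσr : σ ≤ r := csSup_le ⟨0, h0S⟩ fun a ha => ha.1.2
    have hσh : 0 ≤ h σ := by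
      rcases hσ0.eq_or_lt with e | hσpos
      · exact e ▸ h0S.2
      have hcl : σ ∈ closure S := csSup_mem_closure ⟨0, h0S⟩ hbdd
      have hsub : S ⊆ Icc 0 σ := fun a ha => ⟨ha.1.1, le_csSup hbdd ha⟩
      have hcont : ContinuousWithinAt h S σ :=
        (continuousWithinAt_comp_add hf hg hcmono hcnonneg hlip hσpos).mono hsub
      have : (𝓝[S] σ).NeBot := mem_closure_iff_nhdsWithin_neBot.1 hcl
      refine ge_of_tendsto hcont.tendsto ?_
      filter_upwards [self_mem_nhdsWithin] with a ha using ha.2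
    have hc : c r = c σ := by
      refine le_antisymm ?_ (hcmono hσ0 hr hσr)
      have hsub : {a ∈ Icc σ r | 0 ≤ leftReg f (c a) + leftReg g a} ⊆ {σ} := fun a ha =>
        le_antisymm (le_csSup hbdd ⟨⟨hσ0.trans ha.1.1, ha.1.2⟩, ha.2⟩) ha.1.1
      have hnull := measure_mono_null hsub (measure_singleton (μ := volume) σ)
      have := (hineq σ r hσ0 hσr).2
      rw [hnull, ENNReal.toReal_zero] at this
      linarith
    have := leftReg_monotoneOn hg hgmono hσ0 hr hσr
    simp only [hh, hc] at hneg hσh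
    linarith
  refine ⟨hpos, fun hgs s hs t ht hst => ?_⟩
  have hs0 : 0 ≤ s := hs
  by_contra! hle
  have hsub : Ioc s t ⊆ {r ∈ Icc s t | 0 < leftReg f (c r) + leftReg g r} := by
    intro r hr
    have hr0 : 0 ≤ r := hs0.trans hr.1.le
    have hc : c r = c s :=
      le_antisymm ((hcmono hr0 ht hr.2).trans hle) (hcmono hs hr0 hr.1.le)
    have h1 := hpos s hs
    have h2 := leftReg_strictMonoOn hg hgs hs hr0 hr.1
    refine ⟨⟨hr.1.le, hr.2⟩, ?_⟩
    simp only [hh] at h1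
    rw [hc]
    linarith
  have h1 := ENNReal.toReal_mono (measure_ne_top_of_subset (sep_subset _ _) (hfin s t))
    (measure_mono (μ := volume) hsub)
  rw [Real.volume_Ioc, ENNReal.toReal_ofReal (by linarith)] at h1
  linarith [(hineq s t hs hst.le).1]
end

section
/- Let f : [0,∞) → ℝ be càdlàg with Δf(t) ≥ 0 for every t > 0 and f(0) ≥ 0, and let γ > 0. Let h be a solution of the sticky equation Sγ(f), and set c(t) = Leb({s ∈ [0,t] : h(s) > 0}). Fix T ≥ 0 and define h̃(s) = h(T + s), c̃(s) = c(T + s) − c(T), and f̃(u) = f(c(T) + u) − f(c(T)). Then for all s ≥ 0: h̃(s) = h(T) + f̃(c̃(s)) + γ · Leb({r ∈ [0,s] : h̃(r) = 0}) and c̃(s) = Leb({r ∈ [0,s] : h̃(r) > 0}). In other words, the time-shifted function h̃ solves the sticky equation driven by the shifted driver f̃ with initial value h(T). -/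
/-!
The restarting identity expresses the additivity of occupation times over `[0, T + s]`: cutting at
`T` and translating the second piece back by `T` splits the time spent in `{h ∈ A}` up to `T + s`
into the time spent up to `T` and the time spent by `h (T + ·)` up to `s`. This is
`occupation_add`. With `A = (0, ∞)` it is the identity for `c̃`; with `A = {0}`, it turns the
difference of the sticky equation at times `T + s` and `T` into the equation for `h̃`.
-/

open MeasureTheory Set Function Filter Topology

/-- Additivity of occupation times. No measurability of `p` is needed: the half-line `(-∞, T]` used
for the cut is Carathéodory measurable, and Lebesgue measure is translation invariant on all
sets. -/
lemma occupation_add (p : ℝ → Prop) {T s : ℝ} (hT : 0 ≤ T) (hs : 0 ≤ s) :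
    (volume {x ∈ Icc (0:ℝ) (T + s) | p x}).toReal
      = (volume {x ∈ Icc (0:ℝ) T | p x}).toReal
        + (volume {u ∈ Icc (0:ℝ) s | p (T + u)}).toReal := by
  have hfin : ∀ (a : ℝ) (q : ℝ → Prop), volume {x ∈ Icc (0:ℝ) a | q x} ≠ ⊤ := fun a q =>
    measure_ne_top_of_subset (sep_subset _ _) measure_Icc_lt_top.ne
  rw [← ENNReal.toReal_add (hfin _ _) (hfin _ _),
    ← measure_inter_add_sdiff {x ∈ Icc (0:ℝ) (T + s) | p x} (measurableSet_Iic (a := T))]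
  have h1 : {x ∈ Icc (0:ℝ) (T + s) | p x} ∩ Iic T = {x ∈ Icc (0:ℝ) T | p x} := by
    ext x
    simp only [mem_inter_iff, mem_ofPred_eq, mem_Icc, mem_Iic]
    constructor
    · rintro ⟨⟨⟨h0, -⟩, hp⟩, h2⟩
      exact ⟨⟨h0, h2⟩, hp⟩
    · rintro ⟨⟨h0, h2⟩, hp⟩
      exact ⟨⟨⟨h0, by linarith⟩, hp⟩, h2⟩
  have h2 : (fun u => T + u) ⁻¹' ({x ∈ Icc (0:ℝ) (T + s) | p x} \ Iic T)
      = Ioc (0:ℝ) s ∩ {u | p (T + u)} := by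
    ext u
    simp only [mem_preimage, Set.mem_sdiff, mem_inter_iff, mem_ofPred_eq, mem_Icc, mem_Iic, mem_Ioc,
      not_le]
    constructor
    · rintro ⟨⟨⟨-, h3⟩, hp⟩, h4⟩
      exact ⟨⟨by linarith, by linarith⟩, hp⟩
    · rintro ⟨⟨h3, h4⟩, hp⟩
      exact ⟨⟨⟨by linarith, by linarith⟩, hp⟩, by linarith⟩
  -- The point `u = 0` lies in both time intervals but is Lebesgue null.
  have h3 : volume (Ioc (0:ℝ) s ∩ {u | p (T + u)}) = volume {u ∈ Icc (0:ℝ) s | p (T + u)} :=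
    measure_congr (Ioc_ae_eq_Icc.inter (ae_eq_refl _))
  rw [h1, ← measure_preimage_add volume T (_ \ _), h2, h3]

/-- Pathwise restarting identity: if `h` solves the sticky equation `Sγ(f)` and
`T ≥ 0`, then the shifted function `h̃(s) = h(T+s)` solves the sticky equation
driven by the shifted driver `f̃(u) = f(c(T)+u) − f(c(T))` with initial value
`h(T)`, with time change `c̃(s) = c(T+s) − c(T)`. -/
theorem sticky_restart
    (f h : ℝ → ℝ) (γ : ℝ) (hγ : 0 < γ)
    (hf : CadlagOn f) (hjump : NonnegJumps f) (hf0 : 0 ≤ f 0)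
    (hsol : StickySol f γ h)
    (T : ℝ) (hT : 0 ≤ T) :
    ∀ s : ℝ, 0 ≤ s →
      h (T + s) = h T
        + (f (posTime h T + (posTime h (T + s) - posTime h T)) - f (posTime h T))
        + γ * (volume {u ∈ Icc (0:ℝ) s | h (T + u) = 0}).toReal ∧
      posTime h (T + s) - posTime h T
        = (volume {u ∈ Icc (0:ℝ) s | 0 < h (T + u)}).toReal := by
  intro s hs
  have hpos : posTime h (T + s) = posTime h T + _ := occupation_add (fun x => 0 < h x) hT hs
  have hzero : zeroTime h (T + s) = zeroTime h T + _ := occupation_add (fun x => h x = 0) hT hs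
  have hTs := hsol.2 (T + s) (add_nonneg hT hs)
  have hT' := hsol.2 T hT
  refine ⟨?_, by rw [hpos]; ring⟩
  rw [add_sub_cancel, hTs, hT', hzero]
  ring
end

section
/- Let f : [0,∞) → ℝ be càdlàg with Δf(t) ≥ 0 for every t > 0 and f(0) ≥ 0, let γ > 0, and set f^γ(u) = f(u) − γu. Assume the equation h(t) = f^γ(c(t)) + γt with c(t) = Leb({s ∈ [0,t] : h(s) > 0}) admits a unique measurable solution (h, c). For each n ≥ 1, let f̃ⁿ : [0,∞) → ℝ be càdlàg, assume f̃ⁿ → f uniformly on compact subsets of [0,∞) as n → ∞, and set fⁿ(u) = f̃ⁿ(u) − γ⌊nu⌋/n. Define recursively cⁿ and hⁿ by cⁿ(0) = cⁿ(0−) = 0, hⁿ(t) = fⁿ(cⁿ(⌊nt⌋/n)) + γ⌊nt⌋/n, and cⁿ(t) = cⁿ(⌊nt⌋/n −) + (t − ⌊nt⌋/n) · 1(hⁿ(t) > 0), where cⁿ(s−) denotes the left limit of cⁿ at s. Then cⁿ → c uniformly on every compact subset of [0,∞). -/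
/-!
The proof is quantitative and compares `c` directly with `cⁿ`. Write `ψ(t) = t - c(t)` and
`ψⁿ(t) = t - cⁿ(t)` for the times spent at or below zero, so that `h = f ∘ c + γ ψ`. Both pairs
satisfy a form of Skorokhod's reflection principle:

* `ψ` grows only while `h ≤ 0`, that is while `γ ψ ≤ -f ∘ c`;
* whenever `c` passes a level `v`, `h` is positive, so that `-f v ≤ γ ψ` from then on.

Hence `γ ψ(t)` is the running supremum of `(-f)⁺` up to `c(t)`, and for `cⁿ` this holds up to a
small error. If `c(t) < cⁿ(t)`, the first property for `c` and the second for `cⁿ` give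
`ψ(t) ≤ ψⁿ(t) + error`, which is an upper bound for `cⁿ(t) - c(t)`; the case `cⁿ(t) < c(t)` is
symmetric.

`cⁿ` crosses levels by steps of length `1/n`, so the second property for `cⁿ` is only available at
the grid point `m/n` just below `v`. The absence of negative jumps
(`NonnegJumps.exists_unif_lower`) is what bounds `f v` from below by `f (m/n)` up to a small error,
uniformly on compact sets.
-/

open MeasureTheory Set Function Filter Topology

/-! ### Functions without negative jumps -/

/-- A càdlàg function without negative jumps is uniformly lower semicontinuous to the right on
compact intervals. -/
theorem NonnegJumps.exists_unif_lower {f : ℝ → ℝ} (hf : CadlagOn f) (hjump : NonnegJumps f)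
    (T : ℝ) {ε : ℝ} (hε : 0 < ε) :
    ∃ δ > 0, ∀ u v : ℝ, 0 ≤ u → u ≤ v → v ≤ T → v < u + δ → f u - ε ≤ f v := by
  have key : ∀ x : ℝ, ∃ r > 0, 0 ≤ x → ∀ u v : ℝ, u ∈ Metric.ball x r → v ∈ Metric.ball x r →
      0 ≤ u → u ≤ v → f u - ε ≤ f v := by
    intro x
    by_cases hx : 0 ≤ x
    swap
    · exact ⟨1, one_pos, fun h => absurd h hx⟩
    obtain ⟨r₁, hr₁, h₁⟩ := Metric.continuousWithinAt_iff.1 (hf.1 x hx) (ε / 2) (half_pos hε)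
    have right : ∀ u, x ≤ u → u < x + r₁ → |f u - f x| < ε / 2 := by
      intro u hu hu'
      have := h₁ (x := u) hu (by rw [Real.dist_eq, abs_lt]; constructor <;> linarith)
      rwa [Real.dist_eq] at this
    rcases hx.eq_or_lt with rfl | hx
    · refine ⟨r₁, hr₁, fun _ u v hu hv hu0 huv => ?_⟩
      rw [Metric.mem_ball, Real.dist_eq, abs_lt] at hu hv
      have a := abs_lt.1 (right u hu0 (by linarith))
      have b := abs_lt.1 (right v (by linarith) (by linarith))
      linarith
    · obtain ⟨L, hL⟩ := hf.2 x hx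
      have hLx : L ≤ f x := by
        have := hjump x hx
        rwa [leftLim_eq_of_tendsto hL] at this
      obtain ⟨r₂, hr₂, h₂⟩ := Metric.tendsto_nhdsWithin_nhds.1 hL (ε / 2) (half_pos hε)
      have left : ∀ u, u < x → x - r₂ < u → |f u - L| < ε / 2 := by
        intro u hu hu'
        have := h₂ (x := u) hu (by rw [Real.dist_eq, abs_lt]; constructor <;> linarith)
        rwa [Real.dist_eq] at this
      refine ⟨min r₁ r₂, lt_min hr₁ hr₂, fun _ u v hu hv hu0 huv => ?_⟩
      have m₁ := min_le_left r₁ r₂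
      have m₂ := min_le_right r₁ r₂
      rw [Metric.mem_ball, Real.dist_eq, abs_lt] at hu hv
      rcases lt_or_ge u x with hux | hux
      · have a := abs_lt.1 (left u hux (by linarith))
        rcases lt_or_ge v x with hvx | hvx
        · have b := abs_lt.1 (left v hvx (by linarith))
          linarith
        · have b := abs_lt.1 (right v hvx (by linarith))
          linarith
      · have a := abs_lt.1 (right u hux (by linarith))
        have b := abs_lt.1 (right v (by linarith) (by linarith))
        linarith
  choose r hr hkey using key
  obtain ⟨δ, hδ, H⟩ := lebesgue_number_lemma_of_metric (s := Icc 0 T)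
    (c := fun x : Icc (0:ℝ) T => Metric.ball (x : ℝ) (r x)) isCompact_Icc
    (fun _ => Metric.isOpen_ball)
    (fun x hx => mem_iUnion.2 ⟨⟨x, hx⟩, Metric.mem_ball_self (hr x)⟩)
  refine ⟨δ, hδ, fun u v hu huv hvT hvδ => ?_⟩
  obtain ⟨x, hx⟩ := H u ⟨hu, huv.trans hvT⟩
  refine hkey x x.2.1 u v (hx (Metric.mem_ball_self hδ)) (hx ?_) hu huv
  rw [Metric.mem_ball, Real.dist_eq, abs_lt]
  constructor <;> linarith

/-! ### The time change `posTime` -/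

theorem posTime_mono_s14 (h : ℝ → ℝ) {s t : ℝ} (hst : s ≤ t) : posTime h s ≤ posTime h t := by
  refine ENNReal.toReal_mono ?_ (measure_mono fun r hr => ⟨⟨hr.1.1, hr.1.2.trans hst⟩, hr.2⟩)
  exact measure_ne_top_of_subset (fun r hr => hr.1) (measure_Icc_lt_top (a := 0) (b := t)).ne

theorem posTime_sub_le (h : ℝ → ℝ) {s t : ℝ} (hst : s ≤ t) :
    posTime h t - posTime h s ≤ t - s := by
  have hs : volume {r ∈ Icc (0:ℝ) s | 0 < h r} ≠ ⊤ :=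
    measure_ne_top_of_subset (fun r hr => hr.1) (measure_Icc_lt_top (a := 0) (b := s)).ne
  have hsub : {r ∈ Icc (0:ℝ) t | 0 < h r} ⊆ {r ∈ Icc (0:ℝ) s | 0 < h r} ∪ Ioc s t := by
    intro r hr
    rcases le_or_gt r s with hrs | hrs
    · exact Or.inl ⟨⟨hr.1.1, hrs⟩, hr.2⟩
    · exact Or.inr ⟨hrs, hr.1.2⟩
  have h1 := ENNReal.toReal_mono (ENNReal.add_ne_top.2 ⟨hs, by simp⟩)
    ((measure_mono hsub).trans (measure_union_le (μ := volume) _ _))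
  rw [ENNReal.toReal_add hs (by simp), Real.volume_Ioc, ENNReal.toReal_ofReal (by linarith)] at h1
  unfold posTime
  linarith

theorem posTime_zero (h : ℝ → ℝ) : posTime h 0 = 0 := by
  have : volume {r ∈ Icc (0:ℝ) 0 | 0 < h r} = 0 :=
    measure_mono_null (t := Icc 0 0) (fun r hr => hr.1) (by simp)
  rw [posTime, this, ENNReal.toReal_zero]

theorem posTime_eq_of_nonpos_s14 {h : ℝ → ℝ} {s t : ℝ} (hst : s ≤ t)
    (hneg : ∀ r, s < r → r ≤ t → h r ≤ 0) : posTime h t = posTime h s := by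
  have : {r ∈ Icc (0:ℝ) t | 0 < h r} = {r ∈ Icc (0:ℝ) s | 0 < h r} := by
    ext r
    refine ⟨fun hr => ⟨⟨hr.1.1, ?_⟩, hr.2⟩, fun hr => ⟨⟨hr.1.1, hr.1.2.trans hst⟩, hr.2⟩⟩
    by_contra! hrs
    exact (hneg r hrs hr.1.2).not_gt hr.2
  rw [posTime, this, ← posTime]

theorem posTime_sub_of_pos {h : ℝ → ℝ} {s t : ℝ} (hs0 : 0 ≤ s) (hst : s ≤ t)
    (hpos : ∀ r, s < r → r ≤ t → 0 < h r) : posTime h t - posTime h s = t - s := by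
  have hs : volume {r ∈ Icc (0:ℝ) s | 0 < h r} ≠ ⊤ :=
    measure_ne_top_of_subset (fun r hr => hr.1) (measure_Icc_lt_top (a := 0) (b := s)).ne
  have hset : {r ∈ Icc (0:ℝ) t | 0 < h r} = {r ∈ Icc (0:ℝ) s | 0 < h r} ∪ Ioc s t := by
    ext r
    constructor
    · intro hr
      rcases le_or_gt r s with hrs | hrs
      · exact Or.inl ⟨⟨hr.1.1, hrs⟩, hr.2⟩
      · exact Or.inr ⟨hrs, hr.1.2⟩
    · rintro (hr | hr)
      · exact ⟨⟨hr.1.1, hr.1.2.trans hst⟩, hr.2⟩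
      · exact ⟨⟨hs0.trans hr.1.le, hr.2⟩, hpos r hr.1 hr.2⟩
  -- Only the measurability of `Ioc s t` is used, so `h` may be arbitrary.
  have hdisj : Disjoint {r ∈ Icc (0:ℝ) s | 0 < h r} (Ioc s t) :=
    Set.disjoint_left.2 fun r hr hr' => (hr.1.2.trans_lt hr'.1).false
  unfold posTime
  rw [hset, measure_union hdisj measurableSet_Ioc, ENNReal.toReal_add hs (by simp),
    Real.volume_Ioc, ENNReal.toReal_ofReal (by linarith)]
  ring

/-- If a solution has passed the level `v` before time `t`, then `f v + γ (t - c t) ≥ 0`: otherwise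
right-continuity of `f` would keep `h` negative while `c` crosses `v`, and `c` would be stuck. -/
theorem neg_le_of_lt_posTime {f h : ℝ → ℝ} {γ : ℝ} (hγ : 0 < γ) (hf : CadlagOn f)
    (heq : ∀ t : ℝ, 0 ≤ t → h t = (f (posTime h t) - γ * posTime h t) + γ * t)
    {t v : ℝ} (ht : 0 ≤ t) (hv : 0 ≤ v) (hvt : v < posTime h t) :
    -f v ≤ γ * (t - posTime h t) := by
  by_contra! hlt
  obtain ⟨δ, hδ, hδf⟩ := Metric.continuousWithinAt_iff.1 (hf.1 v hv)
    (-f v - γ * (t - posTime h t)) (by linarith)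
  have hneg : ∀ w, v ≤ w → w < v + δ → f w + γ * (t - posTime h t) < 0 := by
    intro w hw hw'
    have := hδf (x := w) hw (by rw [Real.dist_eq, abs_lt]; constructor <;> linarith)
    rw [Real.dist_eq, abs_lt] at this
    linarith
  have hcont := (posTime_continuous h).continuousOn (s := Icc 0 t)
  obtain ⟨s₀, hs₀, hs₀v⟩ := intermediate_value_Icc ht hcont
    (show v ∈ Icc (posTime h 0) (posTime h t) from ⟨by rwa [posTime_zero], hvt.le⟩)
  set w := min (v + δ / 2) (posTime h t)
  have hvw : v < w := lt_min (by linarith) hvt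
  have hw₁ : w ≤ v + δ / 2 := min_le_left _ _
  obtain ⟨s₁, hs₁, hs₁w⟩ := intermediate_value_Icc ht hcont
    (show w ∈ Icc (posTime h 0) (posTime h t) from
      ⟨by rw [posTime_zero]; linarith, min_le_right _ _⟩)
  have hss : s₀ ≤ s₁ := by
    by_contra! hs
    have := posTime_mono_s14 h hs.le
    linarith
  have hflat := posTime_eq_of_nonpos_s14 (h := h) hss (fun r hr hr' => by
    have h1 := posTime_mono_s14 h hr.le
    have h2 := posTime_mono_s14 h hr'
    have h3 := hneg (posTime h r) (by linarith) (by linarith)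
    have h4 := mul_le_mul_of_nonneg_left (posTime_sub_le h (hr'.trans hs₁.2)) hγ.le
    rw [heq r (hs₀.1.trans hr.le)]
    linarith)
  linarith

/-- The time `t - posTime h t` spent at or below zero grows only while `h ≤ 0`, so a bound valid at
those times is valid at all times. -/
theorem sub_posTime_le {h : ℝ → ℝ} {t B : ℝ} (ht : 0 ≤ t) (hB : 0 ≤ B)
    (hbd : ∀ s, 0 ≤ s → s ≤ t → h s ≤ 0 → s - posTime h s ≤ B) : t - posTime h t ≤ B := by
  by_contra! hlt
  obtain ⟨B', hB', hB't⟩ := exists_between hlt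
  obtain ⟨s₀, hs₀, hs₀B⟩ := intermediate_value_Icc ht
    ((continuous_id.sub (posTime_continuous h)).continuousOn (s := Icc 0 t))
    (show B' ∈ Icc _ _ from ⟨by simp [posTime_zero]; linarith, by simpa using hB't.le⟩)
  simp only [Pi.sub_apply, id] at hs₀B
  have := posTime_sub_of_pos (h := h) hs₀.1 hs₀.2 (fun r hr hr' => by
    by_contra! hneg
    have h1 := hbd r (hs₀.1.trans hr.le) hr' hneg
    have h2 := posTime_sub_le h hr.le
    linarith)
  linarith

/-! ### The Euler scheme -/

/-- The value `hⁿ(k/n)` that decides step `k` of the scheme with driver `g`, when `cⁿ(k/n) = a/n`,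
that is, when `a` of the `k` previous steps were moves. -/
noncomputable def eulerVal (g : ℝ → ℝ) (γ : ℝ) (n a k : ℕ) : ℝ :=
  g (a / n) + γ * ((k : ℝ) - a) / n

/-- `a k` counts the moves of an Euler scheme with driver `g` and mesh `1/n` before step `k`. -/
def IsEulerCount (g : ℝ → ℝ) (γ : ℝ) (n : ℕ) (a : ℕ → ℕ) : Prop :=
  a 0 = 0 ∧ ∀ k, (0 < eulerVal g γ n (a k) k ∧ a (k + 1) = a k + 1) ∨
    (eulerVal g γ n (a k) k ≤ 0 ∧ a (k + 1) = a k)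

namespace IsEulerCount

variable {g : ℝ → ℝ} {γ : ℝ} {n : ℕ} {a : ℕ → ℕ}

theorem mono (H : IsEulerCount g γ n a) : Monotone a :=
  monotone_nat_of_le_succ fun k => by rcases H.2 k with h | h <;> omega

theorem gap_mono (H : IsEulerCount g γ n a) : Monotone fun k : ℕ => (k : ℝ) - a k :=
  monotone_nat_of_le_succ fun k => by
    rcases H.2 k with h | h <;> simp only [h.2] <;> push_cast <;> linarith

/-- Each level below the current one was left by a move. -/
theorem exists_move (H : IsEulerCount g γ n a) {m : ℕ} :
    ∀ {k : ℕ}, m < a k → ∃ j < k, a j = m ∧ 0 < eulerVal g γ n m j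
  | 0, hm => by simp [H.1] at hm
  | k + 1, hm => by
    by_cases hk : m < a k
    · obtain ⟨j, hj, h⟩ := H.exists_move hk
      exact ⟨j, by omega, h⟩
    · rcases H.2 k with h | h
      · obtain rfl : a k = m := by omega
        exact ⟨k, by omega, rfl, h.1⟩
      · omega

/-- The number of steps without a move is controlled by its values at those steps. -/
theorem gap_le (H : IsEulerCount g γ n a) {B : ℝ} (hB : 0 ≤ B) {k : ℕ}
    (hbd : ∀ j ≤ k, eulerVal g γ n (a j) j ≤ 0 → (j : ℝ) - a j ≤ B) :
    ∀ i ≤ k + 1, (i : ℝ) - a i ≤ B + 1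
  | 0, _ => by simp [H.1]; linarith
  | i + 1, hi => by
    rcases H.2 i with h | h
    · have := H.gap_le hB hbd i (by omega)
      rw [h.2]; push_cast; linarith
    · have := hbd i (by omega) h.1
      rw [h.2]; push_cast; linarith

end IsEulerCount

theorem floor_mul_eq {n : ℕ} (hn : 1 ≤ n) {t : ℝ} {k : ℕ} (h₁ : (k : ℝ) / n ≤ t)
    (h₂ : t < ((k : ℝ) + 1) / n) : ⌊(n : ℝ) * t⌋ = (k : ℤ) := by
  have hn' : (0 : ℝ) < n := by exact_mod_cast hn
  rw [div_le_iff₀ hn'] at h₁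
  rw [lt_div_iff₀ hn'] at h₂
  rw [Int.floor_eq_iff]
  push_cast
  constructor <;> linarith

/-- The implicit description of the scheme through left limits unfolds to an explicit recursion: at
grid points `cⁿ` takes the values `a k / n`, and it is affine in between. -/
theorem exists_eulerCount {γ : ℝ} {n : ℕ} (hn1 : 1 ≤ n) {g F C H : ℝ → ℝ}
    (hF : ∀ u : ℝ, F u = g u - γ * (⌊(n : ℝ) * u⌋ : ℝ) / n)
    (hC0 : ∀ s : ℝ, s ≤ 0 → C s = 0)
    (hH : ∀ t : ℝ, 0 ≤ t →
      H t = F (C ((⌊(n : ℝ) * t⌋ : ℝ) / n)) + γ * (⌊(n : ℝ) * t⌋ : ℝ) / n)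
    (hC : ∀ t : ℝ, 0 ≤ t →
      C t = Function.leftLim C ((⌊(n : ℝ) * t⌋ : ℝ) / n)
        + (t - (⌊(n : ℝ) * t⌋ : ℝ) / n) * (if 0 < H t then 1 else 0)) :
    ∃ a : ℕ → ℕ, IsEulerCount g γ n a ∧ ∀ (k : ℕ) (t : ℝ), (k : ℝ) / n ≤ t →
      t < ((k : ℝ) + 1) / n →
      C t = (a k : ℝ) / n + (t - (k : ℝ) / n) * ((a (k + 1) : ℝ) - a k) := by
  have hn : (0 : ℝ) < n := by exact_mod_cast hn1
  have hlt : ∀ k : ℕ, (k : ℝ) / n < ((k : ℝ) + 1) / n := fun k => by gcongr; linarith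
  have hk0 : ∀ k : ℕ, (0 : ℝ) ≤ (k : ℝ) / n := fun k => by positivity
  have hleft : ∀ k : ℕ, Function.leftLim C ((k : ℝ) / n) = C ((k : ℝ) / n) := by
    intro k
    have := hC ((k : ℝ) / n) (hk0 k)
    rw [floor_mul_eq hn1 le_rfl (hlt k)] at this
    simpa using this.symm
  have haff : ∀ (k : ℕ) (t : ℝ), (k : ℝ) / n ≤ t → t < ((k : ℝ) + 1) / n →
      C t = C ((k : ℝ) / n) + (t - (k : ℝ) / n) * (if 0 < H ((k : ℝ) / n) then 1 else 0) := by
    intro k t h₁ h₂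
    have hHt : H t = H ((k : ℝ) / n) := by
      rw [hH t ((hk0 k).trans h₁), hH _ (hk0 k), floor_mul_eq hn1 h₁ h₂,
        floor_mul_eq hn1 le_rfl (hlt k)]
    have := hC t ((hk0 k).trans h₁)
    rw [floor_mul_eq hn1 h₁ h₂, Int.cast_natCast, hleft, hHt] at this
    exact this
  have hstep : ∀ k : ℕ, C (((k : ℝ) + 1) / n) =
      C ((k : ℝ) / n) + (1 / n) * (if 0 < H ((k : ℝ) / n) then 1 else 0) := by
    intro k
    have h1 := hleft (k + 1)
    push_cast at h1
    rw [← h1]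
    apply leftLim_eq_of_tendsto
    have hev : ∀ᶠ t in 𝓝[<] (((k : ℝ) + 1) / n), C ((k : ℝ) / n) +
        (t - (k : ℝ) / n) * (if 0 < H ((k : ℝ) / n) then 1 else 0) = C t := by
      filter_upwards [Ioo_mem_nhdsLT (hlt k)] with t ht
      exact (haff k t ht.1.le ht.2).symm
    refine Tendsto.congr' hev ?_
    have hcont : Continuous fun t : ℝ => C ((k : ℝ) / n) +
        (t - (k : ℝ) / n) * (if 0 < H ((k : ℝ) / n) then (1 : ℝ) else 0) := by fun_prop
    have := (hcont.tendsto (((k : ℝ) + 1) / n)).mono_left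
      (nhdsWithin_le_nhds (s := Iio (((k : ℝ) + 1) / n)))
    convert this using 3
    ring
  have hex : ∀ k : ℕ, ∃ m : ℕ, C ((k : ℝ) / n) = (m : ℝ) / n := by
    intro k
    induction k with
    | zero => exact ⟨0, by simp [hC0]⟩
    | succ k ih =>
      obtain ⟨m, hm⟩ := ih
      push_cast
      rw [hstep, hm]
      split_ifs
      · exact ⟨m + 1, by push_cast; ring⟩
      · exact ⟨m, by ring⟩
  choose a ha using hex
  have hHval : ∀ k : ℕ, H ((k : ℝ) / n) = eulerVal g γ n (a k) k := by
    intro k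
    rw [hH _ (hk0 k), floor_mul_eq hn1 le_rfl (hlt k), Int.cast_natCast, ha, hF,
      floor_mul_eq hn1 le_rfl (hlt (a k)), Int.cast_natCast, eulerVal]
    ring
  have hinc : ∀ k : ℕ, (a (k + 1) : ℝ) = a k + (if 0 < H ((k : ℝ) / n) then 1 else 0) := by
    intro k
    have h1 := hstep k
    have h2 := ha (k + 1)
    push_cast at h2
    rw [h2, ha] at h1
    field_simp at h1
    linarith
  refine ⟨a, ⟨?_, fun k => ?_⟩, fun k t h₁ h₂ => ?_⟩
  · have h1 := ha 0
    rw [hC0 _ (by simp)] at h1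
    have : (a 0 : ℝ) = 0 := by field_simp at h1; linarith
    exact_mod_cast this
  · have h1 := hinc k
    rw [hHval] at h1
    split_ifs at h1 with hp
    · exact Or.inl ⟨hp, by exact_mod_cast h1⟩
    · exact Or.inr ⟨not_lt.1 hp, by rw [add_zero] at h1; exact_mod_cast h1⟩
  · rw [haff k t h₁ h₂, ha, hinc]
    ring

/-! ### Comparison of the two time changes -/

/-- Euler-type approximation scheme for the time-change equation
`h(t) = f^γ(c(t)) + γt`, `c(t) = Leb({s ∈ [0,t] : h(s) > 0})`:
if the equation admits a unique measurable solution `(h, c)` and the càdlàg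
drivers `f̃ⁿ` converge to `f` uniformly on compact subsets of `[0,∞)`, then the
piecewise-linear Euler time changes `cⁿ` converge to `c` uniformly on every
compact subset of `[0,∞)`. -/
theorem euler_scheme_converges
    (f : ℝ → ℝ) (γ : ℝ) (hγ : 0 < γ)
    (hf : CadlagOn f) (hjump : NonnegJumps f) (hf0 : 0 ≤ f 0)
    -- the unique solution (h, c)
    (h c : ℝ → ℝ)
    (hmeas : Measurable ((Ici (0:ℝ)).restrict h))
    (hc : ∀ t : ℝ, 0 ≤ t → c t = posTime h t)
    (heq : ∀ t : ℝ, 0 ≤ t → h t = (f (c t) - γ * c t) + γ * t)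
    (huniq : ∀ h' : ℝ → ℝ, Measurable ((Ici (0:ℝ)).restrict h') →
      (∀ t : ℝ, 0 ≤ t →
        h' t = (f (posTime h' t) - γ * posTime h' t) + γ * t) →
      ∀ t : ℝ, 0 ≤ t → h' t = h t)
    -- the approximating drivers
    (ftil : ℕ → ℝ → ℝ)
    (hftil : ∀ n : ℕ, 1 ≤ n → CadlagOn (ftil n))
    (hconv : ∀ K : Set ℝ, K ⊆ Ici 0 → IsCompact K →
      TendstoUniformlyOn (fun n => ftil n) f atTop K)
    (fn : ℕ → ℝ → ℝ)
    (hfn : ∀ n : ℕ, 1 ≤ n → ∀ u : ℝ,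
      fn n u = ftil n u - γ * (⌊(n : ℝ) * u⌋ : ℝ) / n)
    -- the Euler scheme
    (cn hn : ℕ → ℝ → ℝ)
    (hcn_neg : ∀ n : ℕ, ∀ s : ℝ, s ≤ 0 → cn n s = 0)
    (hhn : ∀ n : ℕ, 1 ≤ n → ∀ t : ℝ, 0 ≤ t →
      hn n t = fn n (cn n ((⌊(n : ℝ) * t⌋ : ℝ) / n)) + γ * (⌊(n : ℝ) * t⌋ : ℝ) / n)
    (hcn : ∀ n : ℕ, 1 ≤ n → ∀ t : ℝ, 0 ≤ t →
      cn n t = Function.leftLim (cn n) ((⌊(n : ℝ) * t⌋ : ℝ) / n)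
        + (t - (⌊(n : ℝ) * t⌋ : ℝ) / n) * (if 0 < hn n t then 1 else 0)) :
    ∀ K : Set ℝ, K ⊆ Ici 0 → IsCompact K →
      TendstoUniformlyOn (fun n => cn n) c atTop K := by
  intro K hK hKc
  obtain ⟨T, hT⟩ := hKc.bddAbove
  rw [Metric.tendstoUniformlyOn_iff]
  intro ε hε
  -- With this accuracy the two one-sided errors `2η/γ` and `η/γ + 1/n` are both below `ε`.
  set η := ε * γ / 4 with hη
  have hη0 : 0 < η := by positivity
  obtain ⟨δ, hδ, hlow⟩ := hjump.exists_unif_lower hf T hη0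
  have hsol : ∀ t : ℝ, 0 ≤ t → h t = (f (posTime h t) - γ * posTime h t) + γ * t := by
    intro t ht
    rw [heq t ht, hc t ht]
  have hev := (Metric.tendstoUniformlyOn_iff.1
    (hconv (Icc 0 T) (fun x hx => hx.1) isCompact_Icc)) η hη0
  have hsmall := (tendsto_order.1 (tendsto_one_div_atTop_nhds_zero_nat (𝕜 := ℝ))).2
    (min δ (ε / 4)) (lt_min hδ (by linarith))
  filter_upwards [hev, hsmall, eventually_ge_atTop 1] with n hclose hn_small hn1 t htK
  have hn : (0 : ℝ) < n := by exact_mod_cast hn1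
  have ht : 0 ≤ t := hK htK
  have htT : t ≤ T := hT htK
  have hnδ := hn_small.trans_le (min_le_left _ _)
  have hnε := hn_small.trans_le (min_le_right _ _)
  obtain ⟨a, ha, hCa⟩ := exists_eulerCount hn1 (hfn n hn1) (hcn_neg n) (hhn n hn1) (hcn n hn1)
  set k := ⌊(n : ℝ) * t⌋₊
  have hk₁ : (k : ℝ) / n ≤ t := by
    rw [div_le_iff₀ hn, mul_comm]; exact Nat.floor_le (by positivity)
  have hk₂ : t < ((k : ℝ) + 1) / n := by
    rw [lt_div_iff₀ hn, mul_comm]; exact Nat.lt_floor_add_one _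
  have hCt := hCa k t hk₁ hk₂
  have hinc : (a k : ℝ) ≤ a (k + 1) := by exact_mod_cast ha.mono (Nat.le_succ k)
  have hgap : (k : ℝ) - a k ≤ (k : ℝ) + 1 - a (k + 1) := by
    simpa using ha.gap_mono (Nat.le_succ k)
  -- `cⁿ` and `ψⁿ` lie between their values at the two neighbouring grid points.
  have hC_lower : (a k : ℝ) / n ≤ cn n t := by
    rw [hCt]; nlinarith
  have hC_upper : cn n t ≤ (a (k + 1) : ℝ) / n := by
    have : t - (k : ℝ) / n ≤ 1 / n := by rw [add_div] at hk₂; linarith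
    have := mul_le_mul_of_nonneg_right this (sub_nonneg.2 hinc)
    rw [hCt]
    have e : (a (k + 1) : ℝ) / n = a k / n + 1 / n * (a (k + 1) - a k) := by ring
    linarith
  have hψ_lower : ((k : ℝ) - a k) / n ≤ t - cn n t := by
    rw [hCt, sub_div]; nlinarith
  have hψ_upper : t - cn n t ≤ ((k : ℝ) + 1 - a (k + 1)) / n := by
    have h1 : t - (k : ℝ) / n ≤ 1 / n := by rw [add_div] at hk₂; linarith
    have := mul_le_mul_of_nonneg_right h1 (sub_nonneg.2 hgap)
    rw [hCt]
    have e : ((k : ℝ) + 1 - a (k + 1)) / n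
      = (k - a k) / n + 1 / n * (k + 1 - a (k + 1) - (k - a k)) := by ring
    have e2 : ((k : ℝ) - a k) / n = k / n - a k / n := by ring
    linarith
  have hψ0 : 0 ≤ posTime h t ∧ posTime h t ≤ t := by
    have h1 := posTime_mono_s14 h ht
    have h2 := posTime_sub_le h ht
    rw [posTime_zero] at h1 h2
    exact ⟨h1, by linarith⟩
  have hψn0 : 0 ≤ t - cn n t := by
    have := ha.gap_mono (Nat.zero_le k)
    simp only [ha.1, Nat.cast_zero, sub_zero] at this
    exact (div_nonneg this hn.le).trans hψ_lower
  have hηγ : η / γ = ε / 4 := by rw [hη]; field_simp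
  rw [hc t ht, Real.dist_eq, abs_lt]
  constructor
  · by_contra! hle
    have hgt : posTime h t < cn n t := by linarith
    have hbd := sub_posTime_le (h := h) (B := t - cn n t + 2 * (η / γ)) ht
      (by have := div_pos hη0 hγ; linarith) (fun s hs0 hst hs => by
      set v := posTime h s with hv
      have hvt : v ≤ posTime h t := posTime_mono_s14 h hst
      have hv0 : 0 ≤ v := by have := posTime_mono_s14 h hs0; rwa [posTime_zero] at this
      set m := ⌊(n : ℝ) * v⌋₊
      have hm₁ : (m : ℝ) / n ≤ v := by
        rw [div_le_iff₀ hn, mul_comm]; exact Nat.floor_le (by positivity)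
      have hm₂ : v < (m : ℝ) / n + 1 / n := by
        rw [← add_div, lt_div_iff₀ hn, mul_comm]; exact Nat.lt_floor_add_one _
      have hm : m < a (k + 1) := by
        have h1 : (m : ℝ) / n < (a (k + 1) : ℝ) / n := by linarith
        exact_mod_cast (div_lt_div_iff_of_pos_right hn).1 h1
      obtain ⟨j, hj, haj, hpos⟩ := ha.exists_move hm
      have hjk := ha.gap_mono (Nat.lt_succ_iff.1 hj)
      simp only [haj] at hjk
      have hjk' : ((j : ℝ) - m) / n ≤ t - cn n t :=
        (div_le_div_of_nonneg_right hjk hn.le).trans hψ_lower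
      have hγj := mul_le_mul_of_nonneg_left hjk' hγ.le
      have hvT : v ≤ T := by linarith [hψ0.2]
      have hd := hclose ((m : ℝ) / n) ⟨by positivity, by linarith⟩
      rw [Real.dist_eq, abs_lt] at hd
      have hl := hlow ((m : ℝ) / n) v (by positivity) hm₁ hvT (by linarith)
      rw [hsol s hs0, ← hv] at hs
      rw [eulerVal, mul_div_assoc] at hpos
      have hfin : γ * (s - v) ≤ γ * (t - cn n t + 2 * (η / γ)) := by
        have : γ * (η / γ) = η := by field_simp
        linarith
      exact le_of_mul_le_mul_left hfin hγ)
    linarith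
  · by_contra! hle
    have hgt : cn n t < posTime h t := by linarith
    have hB : ∀ j ≤ k, eulerVal (ftil n) γ n (a j) j ≤ 0 →
        (j : ℝ) - a j ≤ n * (t - posTime h t + η / γ) := by
      intro j hj hneg
      have hv : (a j : ℝ) / n ≤ cn n t := by
        refine le_trans ?_ hC_lower
        gcongr
        exact ha.mono hj
      have h1 := neg_le_of_lt_posTime hγ hf hsol ht (v := (a j : ℝ) / n) (by positivity)
        (by linarith)
      have hd := hclose ((a j : ℝ) / n) ⟨by positivity, by linarith⟩
      rw [Real.dist_eq, abs_lt] at hd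
      rw [eulerVal, mul_div_assoc] at hneg
      have hfin : γ * (((j : ℝ) - a j) / n) ≤ γ * (t - posTime h t + η / γ) := by
        have : γ * (η / γ) = η := by field_simp
        linarith
      have := le_of_mul_le_mul_left hfin hγ
      rw [div_le_iff₀ hn] at this
      linarith
    have hB0 : 0 ≤ (n : ℝ) * (t - posTime h t + η / γ) := by
      have := div_pos hη0 hγ
      have := hψ0.2
      exact mul_nonneg hn.le (by linarith)
    have h2 := ha.gap_le hB0 hB (k + 1) le_rfl
    push_cast at h2
    have h3 := hψ_upper.trans (div_le_div_of_nonneg_right h2 hn.le)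
    have e : ((n : ℝ) * (t - posTime h t + η / γ) + 1) / n = t - posTime h t + η / γ + 1 / n := by
      field_simp
    linarith
end
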